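/- Let b₁ < 0 < b₂, B = diag(b₁,b₂), and Q(x) = [[0,Q₁₂(x)],[Q₂₁(x),0]] with Q₁₂, Q₂₁ ∈ L¹[0,1]. Let Δ(λ) be the characteristic determinant of the boundary value problem with regular boundary conditions (J₁₄ J₃₂ ≠ 0) and let Δ₀(λ) = J₁₂ + J₃₄ e^{i(b₁+b₂)λ} + J₃₂ e^{i b₁ λ} + J₁₄ e^{i b₂ λ} be the characteristic determinant of the unperturbed (Q = 0) problem, with zero set Λ⁰ enumerated (with multiplicity) as {λ_n⁰}_{n∈ℤ} ordered so that Re λ_n⁰ ≤ Re λ_{n+1}⁰. Then the zeros of Δ (with multiplicity) can be enumerated as {λ_n}_{n∈ℤ} in such a way that λ_n = λ_n⁰ + o(1), i.e. λ_n − λ_n⁰ → 0 as |n| → ∞. -/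

import Mathlib

open MeasureTheory Set Complex Filter ComplexConjugate
open scoped ENNReal NNReal

noncomputable section

/-- Lebesgue measure restricted to `[0,1]`. -/
def μ01 : Measure ℝ := volume.restrict (Set.Icc (0:ℝ) 1)

/-- `y` is a `W^{1,1}` solution on `[0,1]` of the Dirac type system
`-i B⁻¹ y' + Q(x) y = λ y`, with `B = diag(b₁,b₂)` and `Q = [[0,Q₁₂],[Q₂₁,0]]`. -/
def IsSol (b₁ b₂ : ℝ) (Q₁₂ Q₂₁ : ℝ → ℂ) (l : ℂ) (y : ℝ → Fin 2 → ℂ) : Prop :=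
  ∃ g : ℝ → Fin 2 → ℂ,
    (∀ i, IntegrableOn (fun t => g t i) (Set.Icc (0:ℝ) 1)) ∧
    (∀ x ∈ Set.Icc (0:ℝ) 1, ∀ i, y x i = y 0 i + ∫ t in (0:ℝ)..x, g t i) ∧
    (∀ᵐ x ∂μ01,
      -Complex.I * ((b₁:ℂ))⁻¹ * g x 0 + Q₁₂ x * y x 1 = l * y x 0 ∧
      -Complex.I * ((b₂:ℂ))⁻¹ * g x 1 + Q₂₁ x * y x 0 = l * y x 1)

/-- `Φ` is the fundamental matrix solution of `-i B⁻¹ Y' + Q Y = λ Y`, `Φ(0,λ) = I₂`;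
`Φ l x j k` is the entry `φ_{jk}(x,λ)` and the `k`-th column solves the system. -/
def IsFundSol (b₁ b₂ : ℝ) (Q₁₂ Q₂₁ : ℝ → ℂ) (Φ : ℂ → ℝ → Fin 2 → Fin 2 → ℂ) : Prop :=
  ∀ l : ℂ, (∀ j k : Fin 2, Φ l 0 j k = if j = k then 1 else 0) ∧
    ∀ k : Fin 2, IsSol b₁ b₂ Q₁₂ Q₂₁ l (fun x j => Φ l x j k)

/-- `J_{jk}`: the determinant of the `2×2` matrix formed by columns `j` and `k`
(0-indexed) of the `2×4` coefficient matrix `aM`. -/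
def Jdet (aM : Fin 2 → Fin 4 → ℂ) (j k : Fin 4) : ℂ :=
  aM 0 j * aM 1 k - aM 0 k * aM 1 j

/-- The boundary form `U_j(y) = a_{j1} y₁(0) + a_{j2} y₂(0) + a_{j3} y₁(1) + a_{j4} y₂(1)`
expressed through the boundary values `y0 = y(0)` and `y1 = y(1)`. -/
def bform (aM : Fin 2 → Fin 4 → ℂ) (j : Fin 2) (y0 y1 : Fin 2 → ℂ) : ℂ :=
  aM j 0 * y0 0 + aM j 1 * y0 1 + aM j 2 * y1 0 + aM j 3 * y1 1

/-- The characteristic determinant `Δ(λ) = det (U_j(Φ_k(·,λ)))_{j,k}`. -/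
def charDet (aM : Fin 2 → Fin 4 → ℂ) (Φ : ℂ → ℝ → Fin 2 → Fin 2 → ℂ) (l : ℂ) : ℂ :=
  bform aM 0 (fun i => Φ l 0 i 0) (fun i => Φ l 1 i 0) *
    bform aM 1 (fun i => Φ l 0 i 1) (fun i => Φ l 1 i 1) -
  bform aM 0 (fun i => Φ l 0 i 1) (fun i => Φ l 1 i 1) *
    bform aM 1 (fun i => Φ l 0 i 0) (fun i => Φ l 1 i 0)

/-- `Δ₀(λ) = J₁₂ + J₃₄ e^{i(b₁+b₂)λ} + J₃₂ e^{i b₁ λ} + J₁₄ e^{i b₂ λ}`, the characteristic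
determinant of the unperturbed (`Q = 0`) problem. -/
def Delta0 (b₁ b₂ : ℝ) (aM : Fin 2 → Fin 4 → ℂ) (l : ℂ) : ℂ :=
  Jdet aM 0 1 + Jdet aM 2 3 * Complex.exp (Complex.I * ((b₁:ℂ) + (b₂:ℂ)) * l) +
    Jdet aM 2 1 * Complex.exp (Complex.I * (b₁:ℂ) * l) +
    Jdet aM 0 3 * Complex.exp (Complex.I * (b₂:ℂ) * l)

/-- `lam : ℤ → ℂ` enumerates the zeros of `F` with multiplicities: every `lam n` is a zero,
every zero occurs, and each zero `μ` occurs exactly `m` times where `m` is its multiplicity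
(the least order of a nonvanishing derivative of `F` at `μ`). -/
def ZeroEnumWithMult (F : ℂ → ℂ) (lam : ℤ → ℂ) : Prop :=
  (∀ n : ℤ, F (lam n) = 0) ∧
  (∀ μ : ℂ, F μ = 0 → ∃ n : ℤ, lam n = μ) ∧
  (∀ μ : ℂ, F μ = 0 → ({n : ℤ | lam n = μ}).Finite ∧
    ∃ m : ℕ, ({n : ℤ | lam n = μ}).ncard = m ∧
      (∀ j : ℕ, j < m → iteratedDeriv j F μ = 0) ∧ iteratedDeriv m F μ ≠ 0)

/-!
The proof compares `Δ` with `Δ₀` by Rouché's theorem on the cells of a grid whose mesh shrinks at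
infinity.

*Asymptotics.* In each of the half planes `Im λ ≥ 0` and `Im λ ≤ 0` one of `e^{i b₁ λ x}`,
`e^{i b₂ λ x}` dominates. Dividing a solution by it leaves a system `u' = p w`, `w' = z w + q u` with
`Re z ≤ 0` and integrable `p`, `q`. Gronwall's inequality bounds its solutions uniformly in `z`
(`system_bound`), and a Riemann–Lebesgue argument shows that it decouples as `|z| → ∞`
(`system_asymp`). Combined with Liouville's formula for `det Φ` this gives
`Δ(λ) - Δ₀(λ) = o(|e^{i b₁ λ}| + |e^{i b₂ λ}|)` uniformly in the plane (`charDet_asymp`).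

*Analyticity.* `Δ` is entire (`charDet_differentiable`). The bracket `y₁ z₂ - y₂ z₁` of solutions
at `λ` and `λ + h` satisfies a scalar equation without potential, from which the complex derivative
of `Φ(1, ·)` is read off.

*Good lines.* Regularity makes `Δ₀` comparable to `|e^{i b₁ λ}| + |e^{i b₂ λ}|` for large `|Im λ|`,
so the zeros lie in a strip. Inside the strip, translates of `Δ₀` form a family of nonzero entire
functions parametrised by a compact set of phases. Hence for each `η > 0` every window of width `η`
contains a vertical line, and likewise a horizontal segment, on which `|Δ₀|` is bounded below
uniformly (`unif_lines`). Far out, `|Δ - Δ₀| < |Δ₀|` there (`good_lines`).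

*Matching.* A diagonal choice of scales `δ(x) → 0` produces a grid of such lines with mesh tending
to `0` (`exists_grid`). Rouché's theorem on rectangles (`rouche`), proved through the argument
principle, gives a bijection of zeros with multiplicity in each cell. Glued together, these
bijections move all but finitely many zeros by less than any given `ε` (`enum_of_lines`).
-/

/-! ### Absolutely continuous functions on the unit interval -/

/-- `f` is absolutely continuous on `[0,1]` with density `f'`: the function is the indefinite
integral of the integrable function `f'`. -/
def ACrep (f f' : ℝ → ℂ) : Prop :=
  IntegrableOn f' (Icc (0:ℝ) 1) ∧ ∀ x ∈ Icc (0:ℝ) 1, f x = f 0 + ∫ t in (0:ℝ)..x, f' t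

lemma uIcc01 : uIcc (0:ℝ) 1 = Icc 0 1 := uIcc_of_le zero_le_one

lemma intervalIntegrable_of_Icc01 {E : Type*} [NormedAddCommGroup E] {g : ℝ → E}
    (hg : IntegrableOn g (Icc (0:ℝ) 1))
    {a b : ℝ} (ha : a ∈ Icc (0:ℝ) 1) (hb : b ∈ Icc (0:ℝ) 1) : IntervalIntegrable g volume a b := by
  rw [intervalIntegrable_iff]
  refine hg.mono_set (uIoc_subset_uIcc.trans ?_)
  exact uIcc_subset_Icc ha hb

lemma zero_mem01 : (0:ℝ) ∈ Icc (0:ℝ) 1 := by simp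

lemma one_mem01 : (1:ℝ) ∈ Icc (0:ℝ) 1 := by simp

lemma ACrep.intervalIntegrable {f f' : ℝ → ℂ} (h : ACrep f f')
    {a b : ℝ} (ha : a ∈ Icc (0:ℝ) 1) (hb : b ∈ Icc (0:ℝ) 1) : IntervalIntegrable f' volume a b :=
  intervalIntegrable_of_Icc01 h.1 ha hb

lemma ACrep.congr {f f' g g' : ℝ → ℂ} (h : ACrep f f') (hf : ∀ x ∈ Icc (0:ℝ) 1, f x = g x)
    (hg : ∀ᵐ x ∂(volume.restrict (Icc (0:ℝ) 1)), f' x = g' x) : ACrep g g' := by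
  refine ⟨h.1.congr hg, fun x hx => ?_⟩
  rw [← hf x hx, ← hf 0 zero_mem01, h.2 x hx]
  congr 1
  apply intervalIntegral.integral_congr_ae
  rw [ae_restrict_iff' measurableSet_Icc] at hg
  filter_upwards [hg] with t ht ht2
  apply ht
  rw [uIoc_of_le hx.1] at ht2
  exact ⟨ht2.1.le, ht2.2.trans hx.2⟩

lemma ac_integral_complex {g : ℝ → ℂ} (hg : IntegrableOn g (Icc (0:ℝ) 1)) :
    AbsolutelyContinuousOnInterval (fun x => ∫ t in (0:ℝ)..x, g t) 0 1 := by
  have hi := intervalIntegrable_of_Icc01 hg zero_mem01 one_mem01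
  have h1 : IntervalIntegrable (fun t => (g t).re) volume 0 1 :=
    ⟨hi.1.re, hi.2.re⟩
  have h2 : IntervalIntegrable (fun t => (g t).im) volume 0 1 :=
    ⟨hi.1.im, hi.2.im⟩
  have a1 := h1.absolutelyContinuousOnInterval_intervalIntegral (c := 0) (by simp)
  have a2 := h2.absolutelyContinuousOnInterval_intervalIntegral (c := 0) (by simp)
  have c1 : AbsolutelyContinuousOnInterval (fun _ : ℝ => (1:ℂ)) 0 1 :=
    (LipschitzWith.const (1:ℂ)).lipschitzOnWith.absolutelyContinuousOnInterval
  have c2 : AbsolutelyContinuousOnInterval (fun _ : ℝ => I) 0 1 :=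
    (LipschitzWith.const I).lipschitzOnWith.absolutelyContinuousOnInterval
  have key := (a1.fun_smul c1).fun_add (a2.fun_smul c2)
  have hEq : ∀ x ∈ Icc (0:ℝ) 1, (∫ t in (0:ℝ)..x, g t) =
      (∫ t in (0:ℝ)..x, (g t).re) • (1:ℂ) + (∫ t in (0:ℝ)..x, (g t).im) • I := by
    intro x hx
    have hix := intervalIntegrable_of_Icc01 hg zero_mem01 hx
    rw [intervalIntegral.integral_of_le hx.1, intervalIntegral.integral_of_le hx.1,
      intervalIntegral.integral_of_le hx.1]
    have := integral_re_add_im (𝕜 := ℂ) hix.1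
    rw [← this]
    simp
  refine Tendsto.congr' ?_ key
  rw [EventuallyEq, eventually_inf_principal]
  filter_upwards with ⟨n, J⟩ hnJ
  refine Finset.sum_congr rfl fun i hi => ?_
  have hm := hnJ.1 i hi
  rw [uIcc01] at hm
  simp only [hEq _ hm.1, hEq _ hm.2]

lemma ACrep.continuousOn {f f' : ℝ → ℂ} (h : ACrep f f') : ContinuousOn f (Icc 0 1) := by
  have h1 : ContinuousOn (fun x => f 0 + ∫ t in (0:ℝ)..x, f' t) (Icc 0 1) := by
    refine continuousOn_const.add ?_
    have := intervalIntegral.continuousOn_primitive_interval (f := f') (μ := volume)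
      (a := 0) (b := 1) (by rw [uIcc01]; exact h.1)
    rwa [uIcc01] at this
  exact h1.congr h.2

lemma ACrep.ae_hasDerivAt {f f' : ℝ → ℂ} (h : ACrep f f') :
    ∀ᵐ x, x ∈ Icc (0:ℝ) 1 → HasDerivAt f (f' x) x := by
  have h1 := (h.intervalIntegrable zero_mem01 one_mem01).ae_hasDerivAt_integral
  have h2 : ∀ᵐ x : ℝ, x ≠ 0 := by simp [ae_iff, measure_singleton]
  have h3 : ∀ᵐ x : ℝ, x ≠ 1 := by simp [ae_iff, measure_singleton]
  filter_upwards [h1, h2, h3] with x hx hx0 hx1 hm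
  have hd := (hx (by rwa [uIcc01]) 0 (by simp)).const_add (f 0)
  refine hd.congr_of_eventuallyEq ?_
  have : Icc (0:ℝ) 1 ∈ nhds x := Icc_mem_nhds (lt_of_le_of_ne hm.1 hx0.symm)
    (lt_of_le_of_ne hm.2 hx1)
  filter_upwards [this] with y hy using h.2 y hy

lemma ac_congr {f g : ℝ → ℂ} (hf : AbsolutelyContinuousOnInterval f 0 1)
    (h : ∀ x ∈ Icc (0:ℝ) 1, f x = g x) : AbsolutelyContinuousOnInterval g 0 1 := by
  refine Tendsto.congr' ?_ hf
  rw [EventuallyEq, eventually_inf_principal]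
  filter_upwards with ⟨n, J⟩ hnJ
  refine Finset.sum_congr rfl fun i hi => ?_
  have hm := hnJ.1 i hi
  rw [uIcc01] at hm
  simp only [h _ hm.1, h _ hm.2]

lemma ACrep.ac {f f' : ℝ → ℂ} (h : ACrep f f') : AbsolutelyContinuousOnInterval f 0 1 := by
  have c1 : AbsolutelyContinuousOnInterval (fun _ : ℝ => f 0) 0 1 :=
    (LipschitzWith.const (f 0)).lipschitzOnWith.absolutelyContinuousOnInterval
  exact ac_congr (c1.fun_add (ac_integral_complex h.1)) fun x hx => (h.2 x hx).symm

lemma ACrep.integrableOn_mul {f f' q : ℝ → ℂ} (h : ACrep f f')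
    (hq : IntegrableOn q (Icc (0:ℝ) 1)) : IntegrableOn (fun t => q t * f t) (Icc (0:ℝ) 1) :=
  hq.mul_continuousOn h.continuousOn isCompact_Icc

/-- An absolutely continuous function with the given a.e. derivative is its indefinite integral. -/
lemma ACrep.of_ac {f f' : ℝ → ℂ} (h : AbsolutelyContinuousOnInterval f 0 1)
    (hi : IntegrableOn f' (Icc (0:ℝ) 1))
    (hd : ∀ᵐ x, x ∈ Icc (0:ℝ) 1 → HasDerivAt f (f' x) x) : ACrep f f' := by
  refine ⟨hi, ?_⟩
  have hI : ACrep (fun x => ∫ t in (0:ℝ)..x, f' t) f' := ⟨hi, fun x _ => by simp⟩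
  obtain ⟨C, hC⟩ := (h.fun_sub hI.ac).const_of_ae_hasDerivAt_zero (by
    rw [uIcc01]
    filter_upwards [hd, hI.ae_hasDerivAt] with x h1 h2 hx
    simpa using! (h1 hx).fun_sub (h2 hx))
  rw [uIcc01] at hC
  intro x hx
  have e1 := hC x hx
  have e0 := hC 0 zero_mem01
  simp only [intervalIntegral.integral_same, sub_zero] at e0
  rw [e0, ← e1]; ring

/-- Product rule for absolutely continuous functions. -/
lemma ACrep.mul {f f' g g' : ℝ → ℂ} (hf : ACrep f f') (hg : ACrep g g') :
    ACrep (fun x => f x * g x) (fun x => f' x * g x + f x * g' x) := by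
  refine ACrep.of_ac (hf.ac.fun_smul hg.ac) ?_ ?_
  · refine (hg.integrableOn_mul hf.1).add ?_
    simpa only [mul_comm] using hf.integrableOn_mul hg.1
  · filter_upwards [hf.ae_hasDerivAt, hg.ae_hasDerivAt] with x h1 h2 hx
    exact (h1 hx).mul (h2 hx)

lemma ACrep.add {f f' g g' : ℝ → ℂ} (hf : ACrep f f') (hg : ACrep g g') :
    ACrep (fun x => f x + g x) (fun x => f' x + g' x) := by
  refine ⟨hf.1.add hg.1, fun x hx => ?_⟩
  rw [intervalIntegral.integral_add (hf.intervalIntegrable zero_mem01 hx)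
    (hg.intervalIntegrable zero_mem01 hx)]
  beta_reduce
  rw [hf.2 x hx, hg.2 x hx]
  ring

lemma ACrep.const_mul {f f' : ℝ → ℂ} (c : ℂ) (hf : ACrep f f') :
    ACrep (fun x => c * f x) (fun x => c * f' x) := by
  refine ⟨hf.1.const_mul c, fun x hx => ?_⟩
  rw [intervalIntegral.integral_const_mul]
  beta_reduce
  rw [hf.2 x hx]
  ring

lemma ACrep.sub {f f' g g' : ℝ → ℂ} (hf : ACrep f f') (hg : ACrep g g') :
    ACrep (fun x => f x - g x) (fun x => f' x - g' x) := by
  have := hf.add (hg.const_mul (-1))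
  simpa [sub_eq_add_neg] using this

lemma ACrep.of_hasDerivAt {f f' : ℝ → ℂ} (h : ∀ x, HasDerivAt f (f' x) x) (hc : Continuous f') :
    ACrep f f' := by
  refine ⟨hc.integrableOn_Icc, fun x _ => ?_⟩
  rw [intervalIntegral.integral_eq_sub_of_hasDerivAt (fun t _ => h t) (hc.intervalIntegrable _ _)]
  ring

lemma ACrep.exp (z : ℂ) : ACrep (fun x => Complex.exp (z * x)) (fun x => z * Complex.exp (z * x)) := by
  refine ACrep.of_hasDerivAt (fun x => ?_) (by fun_prop)
  have h1 : HasDerivAt (fun x : ℝ => z * (x:ℂ)) z x := by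
    simpa using (Complex.ofRealCLM.hasDerivAt (x := x)).const_mul z
  simpa [mul_comm] using h1.cexp

lemma ACrep.integral_eq {f f' : ℝ → ℂ} (h : ACrep f f') {x : ℝ} (hx : x ∈ Icc (0:ℝ) 1) :
    ∫ t in (0:ℝ)..x, f' t = f x - f 0 := by rw [h.2 x hx]; ring

lemma ACrep.pow {f f' : ℝ → ℂ} (h : ACrep f f') (n : ℕ) :
    ACrep (fun x => f x ^ (n+1)) (fun x => (n+1) * (f' x * f x ^ n)) := by
  induction n with
  | zero => simpa using h
  | succ n ih =>
    refine (ih.mul h).congr (fun x _ => by ring) (ae_of_all _ fun x => ?_)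
    push_cast
    ring

/-- Gronwall's inequality with an integrable kernel; the constant depends on the kernel only. -/
lemma gronwall_L1 {k : ℝ → ℝ} (hk : IntegrableOn k (Icc (0:ℝ) 1)) (hk0 : ∀ x, 0 ≤ k x) :
    ∃ M : ℝ, 0 < M ∧ ∀ (f : ℝ → ℝ) (C : ℝ), ContinuousOn f (Icc 0 1) → (∀ x ∈ Icc (0:ℝ) 1, 0 ≤ f x) →
      0 ≤ C →
      (∀ x ∈ Icc (0:ℝ) 1, f x ≤ C + ∫ t in (0:ℝ)..x, k t * f t) →
      ∀ x ∈ Icc (0:ℝ) 1, f x ≤ M * C := by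
  set K : ℝ → ℝ := fun x => 1 + ∫ t in (0:ℝ)..x, k t with hK
  have hKmono : ∀ x ∈ Icc (0:ℝ) 1, 1 ≤ K x ∧ K x ≤ K 1 := by
    intro x hx
    have h1 : 0 ≤ ∫ t in (0:ℝ)..x, k t := intervalIntegral.integral_nonneg hx.1 fun t _ => hk0 t
    have h2 : 0 ≤ ∫ t in x..1, k t := intervalIntegral.integral_nonneg hx.2 fun t _ => hk0 t
    have h3 := intervalIntegral.integral_add_adjacent_intervals
      (intervalIntegrable_of_Icc01 hk zero_mem01 hx) (intervalIntegrable_of_Icc01 hk hx one_mem01)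
    simp only [hK]
    constructor <;> linarith
  have hKac : ACrep (fun x => (K x : ℂ)) (fun x => (k x : ℂ)) := by
    refine ⟨hk.ofReal, fun x _ => ?_⟩
    simp [hK, intervalIntegral.integral_ofReal]
  obtain ⟨p, hp⟩ := exists_nat_ge (2 * K 1)
  have hpow := hKac.pow p
  -- the weight `K ^ p` absorbs the kernel: `∫ k K^p = (K^(p+1) - 1)/(p+1) ≤ K^p / 2`, because
  -- `K' = k` and `2 * K 1 ≤ p`
  have hint : ∀ x ∈ Icc (0:ℝ) 1, ∫ t in (0:ℝ)..x, k t * K t ^ p ≤ K x ^ p / 2 := by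
    intro x hx
    have e := hpow.integral_eq hx
    rw [intervalIntegral.integral_const_mul] at e
    have e2 : (((p:ℝ)+1) * ∫ t in (0:ℝ)..x, k t * K t ^ p) = K x ^ (p+1) - K 0 ^ (p+1) := by
      have : ((((p:ℝ)+1) * ∫ t in (0:ℝ)..x, k t * K t ^ p : ℝ) : ℂ)
          = ((K x ^ (p+1) - K 0 ^ (p+1) : ℝ) : ℂ) := by
        push_cast
        rw [← e, ← intervalIntegral.integral_ofReal]
        push_cast
        rfl
      exact_mod_cast this
    have hK0 : K 0 = 1 := by simp [hK]
    have hx1 := hKmono x hx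
    rw [hK0, one_pow] at e2
    have hpp : (0:ℝ) < p + 1 := by positivity
    have h3 : K x ^ (p+1) = K x ^ p * K x := pow_succ _ _
    have h4 : 0 ≤ K x ^ p := pow_nonneg (by linarith) _
    have h5 : (∫ t in (0:ℝ)..x, k t * K t ^ p) = (K x ^ p * K x - 1) / (p+1) := by
      rw [← h3, ← e2]; field_simp
    rw [h5, div_le_iff₀ hpp]
    nlinarith
  have hKcont : ContinuousOn K (Icc 0 1) := by
    have := Complex.continuous_re.comp_continuousOn hKac.continuousOn
    simpa [Function.comp_def] using this
  refine ⟨2 * K 1 ^ p, by have := hKmono 1 one_mem01; have : 0 < K 1 := by linarith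
                          positivity, ?_⟩
  intro f C hfc hf0 hC hineq
  obtain ⟨xs, hxs, hmax⟩ := isCompact_Icc.exists_isMaxOn (nonempty_Icc.2 zero_le_one)
    (hfc.div (hKcont.pow p) (fun x hx => by
      have := hKmono x hx
      exact pow_ne_zero _ (by linarith)))
  set m := f xs / K xs ^ p with hm
  have hfm : ∀ x ∈ Icc (0:ℝ) 1, f x ≤ m * K x ^ p := by
    intro x hx
    have h1 := hmax hx
    have h2 := hKmono x hx
    have : 0 < K x ^ p := pow_pos (by linarith) _
    simp only [Pi.div_apply, Set.mem_ofPred_eq, Pi.pow_apply] at h1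
    rwa [div_le_iff₀ this] at h1
  have hKs := hKmono xs hxs
  have hKsp : 0 < K xs ^ p := pow_pos (by linarith) _
  have hm0 : 0 ≤ m := div_nonneg (hf0 xs hxs) hKsp.le
  have hfs : f xs = m * K xs ^ p := by rw [hm]; field_simp
  have hle : ∫ t in (0:ℝ)..xs, k t * f t ≤ ∫ t in (0:ℝ)..xs, m * (k t * K t ^ p) := by
    have hsub : uIcc 0 xs ⊆ Icc (0:ℝ) 1 := uIcc_subset_Icc zero_mem01 hxs
    apply intervalIntegral.integral_mono_on hxs.1
    · exact (intervalIntegrable_of_Icc01 hk zero_mem01 hxs).mul_continuousOn (hfc.mono hsub)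
    · exact ((intervalIntegrable_of_Icc01 hk zero_mem01 hxs).mul_continuousOn
        ((hKcont.pow p).mono hsub)).const_mul m
    · intro t ht
      have := hfm t ⟨ht.1, ht.2.trans hxs.2⟩
      nlinarith [hk0 t]
  rw [intervalIntegral.integral_const_mul] at hle
  have h6 := hineq xs hxs
  have h7 := hint xs hxs
  have h1p : 1 ≤ K xs ^ p := one_le_pow₀ hKs.1
  have hmC : m ≤ 2 * C := by
    have : m * K xs ^ p ≤ 2 * C := by nlinarith
    nlinarith
  intro x hx
  have h8 := hKmono x hx
  have h9 : K x ^ p ≤ K 1 ^ p := pow_le_pow_left₀ (by linarith) h8.2 p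
  have h10 : 0 ≤ K x ^ p := pow_nonneg (by linarith) p
  calc f x ≤ m * K x ^ p := hfm x hx
    _ ≤ (2 * C) * K 1 ^ p := by gcongr
    _ = _ := by ring

/-! ### Oscillatory integrals and the normalised system -/

lemma norm_integral01_le {g : ℝ → ℂ} {b : ℝ → ℝ} {x : ℝ} (hx : x ∈ Icc (0:ℝ) 1)
    (hb : IntegrableOn b (Icc (0:ℝ) 1)) (h : ∀ t ∈ Icc (0:ℝ) x, ‖g t‖ ≤ b t) :
    ‖∫ t in (0:ℝ)..x, g t‖ ≤ ∫ t in (0:ℝ)..x, b t :=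
  intervalIntegral.norm_integral_le_of_norm_le hx.1
    (ae_of_all _ fun t ht => h t ⟨ht.1.le, ht.2⟩) (intervalIntegrable_of_Icc01 hb zero_mem01 hx)

lemma integral01_mono {b : ℝ → ℝ} {x : ℝ} (hx : x ∈ Icc (0:ℝ) 1)
    (hb : IntegrableOn b (Icc (0:ℝ) 1)) (h : ∀ t, 0 ≤ b t) :
    ∫ t in (0:ℝ)..x, b t ≤ ∫ t in (0:ℝ)..1, b t :=
  intervalIntegral.integral_mono_interval le_rfl hx.1 hx.2 (ae_of_all _ h)
    (intervalIntegrable_of_Icc01 hb zero_mem01 one_mem01)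

lemma exists_smooth_approx {q : ℝ → ℂ} (hq : IntegrableOn q (Icc (0:ℝ) 1)) {δ : ℝ} (hδ : 0 < δ) :
    ∃ p p' : ℝ → ℂ, (∀ x, HasDerivAt p (p' x) x) ∧ Continuous p' ∧
      ∫ t in (0:ℝ)..1, ‖q t - p t‖ ≤ δ := by
  have hm : MemLp q 1 (volume.restrict (Icc (0:ℝ) 1)) := memLp_one_iff_integrable.2 hq
  obtain ⟨p, -, hp, hle⟩ := hm.exist_eLpNorm_sub_le ENNReal.one_ne_top le_rfl hδ
  refine ⟨p, deriv p, fun x => (hp.differentiable (by simp) x).hasDerivAt,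
    hp.continuous_deriv (by simp), ?_⟩
  have hpi : IntegrableOn p (Icc (0:ℝ) 1) := hp.continuous.integrableOn_Icc
  rw [intervalIntegral.integral_of_le zero_le_one, ← integral_Icc_eq_integral_Ioc]
  change ∫ t in Icc (0:ℝ) 1, ‖(q - p) t‖ ≤ δ
  rw [integral_norm_eq_lintegral_enorm (hq.sub hpi).aestronglyMeasurable]
  rw [eLpNorm_one_eq_lintegral_enorm] at hle
  exact ENNReal.toReal_le_of_le_ofReal hδ.le hle

/-- A uniform Riemann–Lebesgue lemma: the convolution of `e^{z t}`, `Re z ≤ 0`, with `q * f` is small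
for large `|z|`, uniformly over all `f` bounded by `C` with total variation at most `C`. -/
lemma osc_small {q : ℝ → ℂ} (hq : IntegrableOn q (Icc (0:ℝ) 1)) {ε C : ℝ} (hε : 0 < ε)
    (hC : 0 ≤ C) :
    ∃ R : ℝ, 0 < R ∧ ∀ z : ℂ, z.re ≤ 0 → R ≤ ‖z‖ → ∀ f f' : ℝ → ℂ, ACrep f f' →
      (∀ x ∈ Icc (0:ℝ) 1, ‖f x‖ ≤ C) → (∫ t in (0:ℝ)..1, ‖f' t‖ ≤ C) →
      ∀ x ∈ Icc (0:ℝ) 1, ‖∫ t in (0:ℝ)..x, Complex.exp (z * (x - t)) * (q t * f t)‖ ≤ ε := by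
  obtain ⟨p, p', hp, hp'c, hpq⟩ := exists_smooth_approx hq (δ := ε / (2 * (C + 1))) (by positivity)
  have hpac : ACrep p p' := ACrep.of_hasDerivAt hp hp'c
  obtain ⟨A₁, hA₁⟩ := isCompact_Icc.exists_bound_of_continuousOn hpac.continuousOn
  obtain ⟨A₂, hA₂⟩ := (isCompact_Icc (a := (0:ℝ)) (b := 1)).exists_bound_of_continuousOn hp'c.continuousOn
  set A := max (max A₁ A₂) 0 with hA
  have hA0 : 0 ≤ A := le_max_right _ _
  have hpA : ∀ t ∈ Icc (0:ℝ) 1, ‖p t‖ ≤ A := fun t ht =>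
    (hA₁ t ht).trans ((le_max_left _ _).trans (le_max_left _ _))
  have hp'A : ∀ t ∈ Icc (0:ℝ) 1, ‖p' t‖ ≤ A := fun t ht =>
    (hA₂ t ht).trans ((le_max_right _ _).trans (le_max_left _ _))
  refine ⟨8 * A * C / ε + 1, by positivity, ?_⟩
  intro z hz hzR f f' hf hfC hf'C x hx
  have hsub : ∀ t ∈ Icc (0:ℝ) x, t ∈ Icc (0:ℝ) 1 := fun t ht => ⟨ht.1, ht.2.trans hx.2⟩
  have hexp : ∀ t ∈ Icc (0:ℝ) x, ‖Complex.exp (z * (x - t))‖ ≤ 1 := by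
    intro t ht
    rw [Complex.norm_exp, Real.exp_le_one_iff]
    have : (z * ((x:ℂ) - t)).re = z.re * (x - t) := by
      rw [← ofReal_sub, re_mul_ofReal]
    rw [this]
    exact mul_nonpos_of_nonpos_of_nonneg hz (by linarith [ht.2])
  have hE : ACrep (fun t : ℝ => Complex.exp (z * (x - t)))
      (fun t : ℝ => -z * Complex.exp (z * (x - t))) := by
    refine ((ACrep.exp (-z)).const_mul (Complex.exp (z * x))).congr (fun t _ => ?_)
      (ae_of_all _ fun t => ?_)
    · rw [← Complex.exp_add]; ring_nf
    · rw [mul_left_comm, ← Complex.exp_add]; ring_nf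
  have hpf := hpac.mul hf
  have hall := hE.mul hpf
  have hinta : IntervalIntegrable (fun t : ℝ => Complex.exp (z * (x - t)) * (p t * f t)) volume 0 x := by
    refine ContinuousOn.intervalIntegrable ?_
    exact ((hE.continuousOn).mul hpf.continuousOn).mono (uIcc_subset_Icc zero_mem01 hx)
  have hintb : IntervalIntegrable (fun t : ℝ => Complex.exp (z * (x - t)) *
      (p' t * f t + p t * f' t)) volume 0 x :=
    intervalIntegrable_of_Icc01 (by
      simpa only [mul_comm] using hE.integrableOn_mul hpf.1) zero_mem01 hx
  have hqf := hf.integrableOn_mul hq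
  have hqpf := hf.integrableOn_mul (hq.sub hpac.continuousOn.integrableOn_Icc)
  have hintc : IntervalIntegrable (fun t : ℝ => Complex.exp (z * (x - t)) *
      ((q t - p t) * f t)) volume 0 x :=
    intervalIntegrable_of_Icc01 (by
      simpa only [mul_comm, Pi.sub_apply] using hE.integrableOn_mul hqpf) zero_mem01 hx
  -- integration by parts against the smooth approximant
  have hparts : z * (∫ t in (0:ℝ)..x, Complex.exp (z * (x - t)) * (p t * f t)) =
      (∫ t in (0:ℝ)..x, Complex.exp (z * (x - t)) * (p' t * f t + p t * f' t)) -
      (p x * f x - Complex.exp (z * x) * (p 0 * f 0)) := by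
    have e := hall.integral_eq hx
    have e2 : (∫ t in (0:ℝ)..x, (-z * Complex.exp (z * (x - t)) * (p t * f t) +
        Complex.exp (z * (x - t)) * (p' t * f t + p t * f' t))) =
        -z * (∫ t in (0:ℝ)..x, Complex.exp (z * (x - t)) * (p t * f t)) +
        ∫ t in (0:ℝ)..x, Complex.exp (z * (x - t)) * (p' t * f t + p t * f' t) := by
      rw [← intervalIntegral.integral_const_mul, ← intervalIntegral.integral_add _ hintb]
      · simp only [mul_assoc]
      · exact hinta.const_mul _
    rw [e2] at e
    simp only [sub_self, mul_zero, Complex.exp_zero, one_mul, ofReal_zero, sub_zero] at e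
    linear_combination -e
  have hf'i : IntegrableOn (fun t => ‖f' t‖) (Icc (0:ℝ) 1) := hf.1.norm
  have hb1 : ‖∫ t in (0:ℝ)..x, Complex.exp (z * (x - t)) * (p' t * f t + p t * f' t)‖ ≤
      A * C + A * C := by
    have hbi : IntegrableOn (fun t => A * C + A * ‖f' t‖) (Icc (0:ℝ) 1) :=
      (continuousOn_const.integrableOn_Icc).add (hf'i.const_mul A)
    refine (norm_integral01_le hx hbi fun t ht => ?_).trans
      ((integral01_mono hx hbi fun t => by positivity).trans ?_)
    · have ht1 := hsub t ht
      calc ‖Complex.exp (z * (x - t)) * (p' t * f t + p t * f' t)‖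
          ≤ 1 * (A * C + A * ‖f' t‖) := by
            rw [norm_mul]
            gcongr
            · exact hexp t ht
            · refine (norm_add_le _ _).trans ?_
              rw [norm_mul, norm_mul]
              gcongr
              · exact hp'A t ht1
              · exact hfC t ht1
              · exact hpA t ht1
        _ = _ := one_mul _
    · rw [intervalIntegral.integral_add (by simp)
        ((intervalIntegrable_of_Icc01 hf'i zero_mem01 one_mem01).const_mul A),
        intervalIntegral.integral_const_mul (r := A) (f := fun t => ‖f' t‖)]
      simp only [intervalIntegral.integral_const, sub_zero, smul_eq_mul, one_mul]
      gcongr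
  have hb2 : ‖p x * f x - Complex.exp (z * x) * (p 0 * f 0)‖ ≤ A * C + A * C := by
    refine (norm_sub_le _ _).trans ?_
    rw [norm_mul, norm_mul, norm_mul]
    have h0 := hexp 0 ⟨le_rfl, hx.1⟩
    simp only [ofReal_zero, sub_zero] at h0
    have h1 := hfC x hx
    have h2 := hpA x hx
    have h3 : ‖p 0‖ * ‖f 0‖ ≤ A * C := by
      gcongr
      · exact hpA 0 zero_mem01
      · exact hfC 0 zero_mem01
    have h4 : ‖p x‖ * ‖f x‖ ≤ A * C := by gcongr
    have h5 : 0 ≤ ‖p 0‖ * ‖f 0‖ := by positivity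
    nlinarith
  have hzpos : 0 < ‖z‖ := lt_of_lt_of_le (by positivity) hzR
  have hI1 : ‖∫ t in (0:ℝ)..x, Complex.exp (z * (x - t)) * (p t * f t)‖ ≤ ε / 2 := by
    have h1 : ‖z‖ * ‖∫ t in (0:ℝ)..x, Complex.exp (z * (x - t)) * (p t * f t)‖ ≤ 4 * A * C := by
      rw [← norm_mul, hparts]
      refine (norm_sub_le _ _).trans ?_
      linarith
    have h2 : 4 * A * C ≤ ‖z‖ * (ε / 2) := by
      have : 8 * A * C / ε ≤ ‖z‖ := by linarith
      rw [div_le_iff₀ hε] at this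
      linarith
    exact le_of_mul_le_mul_left (h1.trans h2) hzpos
  have hI2 : ‖∫ t in (0:ℝ)..x, Complex.exp (z * (x - t)) * ((q t - p t) * f t)‖ ≤ ε / 2 := by
    have hbi : IntegrableOn (fun t => C * ‖q t - p t‖) (Icc (0:ℝ) 1) :=
      ((hq.sub hpac.continuousOn.integrableOn_Icc).norm).const_mul C
    refine (norm_integral01_le hx hbi fun t ht => ?_).trans
      ((integral01_mono hx hbi fun t => by positivity).trans ?_)
    · rw [norm_mul, norm_mul]
      have h1 := hexp t ht
      have h2 := hfC t (hsub t ht)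
      have h3 : ‖q t - p t‖ * ‖f t‖ ≤ ‖q t - p t‖ * C := by gcongr
      have h5 : 0 ≤ ‖q t - p t‖ * ‖f t‖ := by positivity
      nlinarith
    · rw [intervalIntegral.integral_const_mul]
      calc C * ∫ t in (0:ℝ)..1, ‖q t - p t‖ ≤ C * (ε / (2 * (C + 1))) := by gcongr
        _ ≤ ε / 2 := by
          rw [mul_div_assoc', div_le_div_iff₀ (by positivity) (by positivity)]
          nlinarith
  have hsplit : (∫ t in (0:ℝ)..x, Complex.exp (z * (x - t)) * (q t * f t)) =
      (∫ t in (0:ℝ)..x, Complex.exp (z * (x - t)) * ((q t - p t) * f t)) +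
      ∫ t in (0:ℝ)..x, Complex.exp (z * (x - t)) * (p t * f t) := by
    rw [← intervalIntegral.integral_add hintc hinta]
    congr 1; ext t; ring
  rw [hsplit]
  refine (norm_add_le _ _).trans ?_
  linarith

/-- Variation of constants. -/
lemma duhamel {w h : ℝ → ℂ} {z : ℂ} (hw : ACrep w (fun t => z * w t + h t)) {x : ℝ}
    (hx : x ∈ Icc (0:ℝ) 1) :
    w x = Complex.exp (z * x) * w 0 + ∫ t in (0:ℝ)..x, Complex.exp (z * (x - t)) * h t := by
  have h1 := ((ACrep.exp (-z)).mul hw).integral_eq hx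
  have h2 : (∫ t in (0:ℝ)..x, Complex.exp (z * (x - t)) * h t) = Complex.exp (z * x) *
      ∫ t in (0:ℝ)..x, (-z * Complex.exp (-z * t) * w t +
        Complex.exp (-z * t) * (z * w t + h t)) := by
    rw [← intervalIntegral.integral_const_mul]
    congr 1
    ext t
    have : Complex.exp (z * (x - t)) = Complex.exp (z * x) * Complex.exp (-z * t) := by
      rw [← Complex.exp_add]; ring_nf
    rw [this]; ring
  rw [h2, h1]
  have h3 : Complex.exp (z * x) * Complex.exp (-z * x) = 1 := by
    rw [← Complex.exp_add]; simp
  simp only [ofReal_zero, mul_zero, Complex.exp_zero, one_mul]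
  linear_combination -w x * h3

/-- Solutions of `u' = p w`, `w' = z w + q u` with `Re z ≤ 0` are bounded uniformly in `z`. -/
lemma system_bound {p q : ℝ → ℂ} (hp : IntegrableOn p (Icc (0:ℝ) 1))
    (hq : IntegrableOn q (Icc (0:ℝ) 1)) :
    ∃ C : ℝ, 0 < C ∧ ∀ z : ℂ, z.re ≤ 0 → ∀ u w : ℝ → ℂ,
      ACrep u (fun t => p t * w t) → ACrep w (fun t => z * w t + q t * u t) →
      ‖u 0‖ ≤ 1 → ‖w 0‖ ≤ 1 → ∀ x ∈ Icc (0:ℝ) 1, ‖u x‖ ≤ C ∧ ‖w x‖ ≤ C := by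
  have hk : IntegrableOn (fun t => ‖p t‖ + ‖q t‖) (Icc (0:ℝ) 1) := hp.norm.add hq.norm
  obtain ⟨M, hM, hG⟩ := gronwall_L1 hk (fun t => by positivity)
  refine ⟨M * 2, by positivity, ?_⟩
  intro z hz u w hu hw hu0 hw0
  have hs : ContinuousOn (fun t => ‖u t‖ + ‖w t‖) (Icc 0 1) :=
    hu.continuousOn.norm.add hw.continuousOn.norm
  have key := hG (fun t => ‖u t‖ + ‖w t‖) 2 hs (fun x _ => by positivity) (by norm_num) (by
    intro x hx
    have hpi : IntegrableOn (fun t => ‖p t‖ * ‖w t‖) (Icc (0:ℝ) 1) := by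
      have := (hw.integrableOn_mul hp).norm
      simp only [norm_mul] at this
      exact this
    have hqi : IntegrableOn (fun t => ‖q t‖ * ‖u t‖) (Icc (0:ℝ) 1) := by
      have := (hu.integrableOn_mul hq).norm
      simp only [norm_mul] at this
      exact this
    have h1 : ‖u x‖ ≤ 1 + ∫ t in (0:ℝ)..x, ‖p t‖ * ‖w t‖ := by
      rw [hu.2 x hx]
      refine (norm_add_le _ _).trans (add_le_add hu0 ?_)
      exact norm_integral01_le hx hpi fun t _ => (norm_mul _ _).le
    have h2 : ‖w x‖ ≤ 1 + ∫ t in (0:ℝ)..x, ‖q t‖ * ‖u t‖ := by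
      have hexp : ∀ t ∈ Icc (0:ℝ) x, ‖Complex.exp (z * (x - t))‖ ≤ 1 := by
        intro t ht
        rw [Complex.norm_exp, Real.exp_le_one_iff]
        have : (z * ((x:ℂ) - t)).re = z.re * (x - t) := by
          rw [← ofReal_sub, re_mul_ofReal]
        rw [this]
        exact mul_nonpos_of_nonpos_of_nonneg hz (by linarith [ht.2])
      rw [duhamel hw hx]
      refine (norm_add_le _ _).trans (add_le_add ?_ ?_)
      · rw [norm_mul]
        have h0 := hexp 0 ⟨le_rfl, hx.1⟩
        simp only [ofReal_zero, sub_zero] at h0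
        exact mul_le_one₀ h0 (norm_nonneg _) hw0
      · refine norm_integral01_le hx hqi fun t ht => ?_
        rw [norm_mul, norm_mul]
        exact mul_le_of_le_one_left (by positivity) (hexp t ht)
    have hki : IntervalIntegrable (fun t => (‖p t‖ + ‖q t‖) * (‖u t‖ + ‖w t‖)) volume 0 x :=
      intervalIntegrable_of_Icc01 (hk.mul_continuousOn hs isCompact_Icc) zero_mem01 hx
    have hpx := intervalIntegrable_of_Icc01 hpi zero_mem01 hx
    have hqx := intervalIntegrable_of_Icc01 hqi zero_mem01 hx
    have h3 := intervalIntegral.integral_mono_on hx.1 (hpx.add hqx) hki (fun t _ => by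
      have := mul_nonneg (norm_nonneg (p t)) (norm_nonneg (u t))
      have := mul_nonneg (norm_nonneg (q t)) (norm_nonneg (w t))
      linarith)
    rw [intervalIntegral.integral_add hpx hqx] at h3
    linarith)
  intro x hx
  have := key x hx
  have h1 := norm_nonneg (u x)
  have h2 := norm_nonneg (w x)
  constructor <;> linarith

/-- As `|z| → ∞` in the closed left half plane the normalised system decouples at `x = 1`. -/
lemma system_asymp {p q : ℝ → ℂ} (hp : IntegrableOn p (Icc (0:ℝ) 1))
    (hq : IntegrableOn q (Icc (0:ℝ) 1)) {ε : ℝ} (hε : 0 < ε) :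
    ∃ R : ℝ, 0 < R ∧ ∀ z : ℂ, z.re ≤ 0 → R ≤ ‖z‖ → ∀ u w : ℝ → ℂ,
      ACrep u (fun t => p t * w t) → ACrep w (fun t => z * w t + q t * u t) →
      ‖u 0‖ ≤ 1 → ‖w 0‖ ≤ 1 → ‖u 1 - u 0‖ ≤ ε ∧ ‖w 1 - Complex.exp z * w 0‖ ≤ ε := by
  obtain ⟨C, hC, hbd⟩ := system_bound hp hq
  set P := ∫ t in (0:ℝ)..1, ‖p t‖ with hP
  have hP0 : 0 ≤ P := intervalIntegral.integral_nonneg zero_le_one fun t _ => norm_nonneg _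
  set C' := max C (P * C) with hC'
  have hCC' : C ≤ C' := le_max_left _ _
  set ε' := min ε (ε / (2 * (P + 1))) with hε'
  have hε'0 : 0 < ε' := lt_min hε (by positivity)
  obtain ⟨R₁, hR₁, h₁⟩ := osc_small hq (C := C') hε'0 (hC.le.trans hCC')
  have hprefl : IntegrableOn (fun t => p (1 - t)) (Icc (0:ℝ) 1) := by
    have hi := (intervalIntegrable_of_Icc01 hp zero_mem01 one_mem01).comp_sub_left 1
    simp only [sub_zero, sub_self] at hi
    have := hi.symm
    rwa [intervalIntegrable_iff_integrableOn_Icc_of_le zero_le_one] at this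
  obtain ⟨R₂, hR₂, h₂⟩ := osc_small hprefl (C := 1) (ε := ε / 2) (by positivity) zero_le_one
  refine ⟨max R₁ R₂, by positivity, ?_⟩
  intro z hz hzR u w hu hw hu0 hw0
  have hb := hbd z hz u w hu hw hu0 hw0
  have hpn : IntegrableOn (fun t => ‖p t‖) (Icc (0:ℝ) 1) := hp.norm
  have hu' : ∫ t in (0:ℝ)..1, ‖p t * w t‖ ≤ C' := by
    have hle := intervalIntegral.integral_mono_on zero_le_one
      (intervalIntegrable_of_Icc01 hu.1.norm zero_mem01 one_mem01)
      ((intervalIntegrable_of_Icc01 hpn zero_mem01 one_mem01).mul_const C)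
      (fun t ht => by
        rw [norm_mul]
        exact mul_le_mul_of_nonneg_left (hb t ht).2 (norm_nonneg _))
    rw [intervalIntegral.integral_mul_const] at hle
    exact hle.trans (le_max_right _ _)
  have hD := h₁ z hz ((le_max_left _ _).trans hzR) u _ hu
    (fun x hx => (hb x hx).1.trans hCC') hu'
  have hDw : ∀ x ∈ Icc (0:ℝ) 1, ‖w x - Complex.exp (z * x) * w 0‖ ≤ ε' := by
    intro x hx
    have := hD x hx
    rwa [duhamel hw hx, add_sub_cancel_left]
  constructor
  · have hone : ACrep (fun _ => (1:ℂ)) (fun _ => 0) :=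
      ACrep.of_hasDerivAt (fun x => hasDerivAt_const x _) continuous_const
    have h3 := h₂ z hz ((le_max_right _ _).trans hzR) _ _ hone (by simp) (by simp) 1 one_mem01
    have h4 : (∫ t in (0:ℝ)..1, Complex.exp (z * ((1:ℝ) - t)) * (p (1 - t) * 1)) =
        ∫ t in (0:ℝ)..1, Complex.exp (z * t) * p t := by
      have := intervalIntegral.integral_comp_sub_left (a := 0) (b := 1)
        (fun t : ℝ => Complex.exp (z * t) * p t) 1
      simp only [sub_self, sub_zero] at this
      rw [← this]
      simp
    rw [h4] at h3
    have hE : IntegrableOn (fun t : ℝ => Complex.exp (z * t) * p t) (Icc (0:ℝ) 1) := by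
      simpa only [mul_comm] using (ACrep.exp z).integrableOn_mul hp
    have hEi := intervalIntegrable_of_Icc01 hE zero_mem01 one_mem01
    have h5 : u 1 - u 0 = (∫ t in (0:ℝ)..1, p t * (w t - Complex.exp (z * t) * w 0)) +
        w 0 * ∫ t in (0:ℝ)..1, Complex.exp (z * t) * p t := by
      rw [← hu.integral_eq one_mem01, ← intervalIntegral.integral_const_mul,
        ← intervalIntegral.integral_add]
      · congr 1; ext t; ring
      · have := (hu.intervalIntegrable zero_mem01 one_mem01).sub (hEi.const_mul (w 0))
        refine this.congr (fun t _ => ?_)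
        ring
      · exact hEi.const_mul _
    rw [h5]
    refine (norm_add_le _ _).trans ?_
    have h6 : ‖∫ t in (0:ℝ)..1, p t * (w t - Complex.exp (z * t) * w 0)‖ ≤ P * ε' := by
      rw [hP, ← intervalIntegral.integral_mul_const]
      refine norm_integral01_le one_mem01 (hpn.mul_const ε') fun t ht => ?_
      rw [norm_mul]
      exact mul_le_mul_of_nonneg_left (hDw t ht) (norm_nonneg _)
    have h7 : P * ε' ≤ ε / 2 := by
      calc P * ε' ≤ P * (ε / (2 * (P + 1))) := by gcongr; exact min_le_right _ _
        _ ≤ ε / 2 := by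
          rw [mul_div_assoc', div_le_div_iff₀ (by positivity) (by positivity)]
          nlinarith
    have h8 : ‖w 0 * ∫ t in (0:ℝ)..1, Complex.exp (z * t) * p t‖ ≤ ε / 2 := by
      rw [norm_mul]
      calc _ ≤ 1 * (ε / 2) := by gcongr
        _ = _ := one_mul _
    linarith
  · have := hDw 1 one_mem01
    simp only [ofReal_one, mul_one] at this
    exact this.trans (min_le_left _ _)

/-! ### Asymptotics of the characteristic determinant -/

/-- The Dirac system in normal form, as a pair of absolutely continuous scalar functions. -/
def Sys (b₁ b₂ : ℝ) (Q₁₂ Q₂₁ : ℝ → ℂ) (l : ℂ) (y₁ y₂ : ℝ → ℂ) : Prop :=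
  ACrep y₁ (fun t => I * b₁ * (l * y₁ t - Q₁₂ t * y₂ t)) ∧
  ACrep y₂ (fun t => I * b₂ * (l * y₂ t - Q₂₁ t * y₁ t))

lemma IsSol.sys {b₁ b₂ : ℝ} (hb₁ : b₁ ≠ 0) (hb₂ : b₂ ≠ 0) {Q₁₂ Q₂₁ : ℝ → ℂ} {l : ℂ}
    {y : ℝ → Fin 2 → ℂ} (h : IsSol b₁ b₂ Q₁₂ Q₂₁ l y) :
    Sys b₁ b₂ Q₁₂ Q₂₁ l (fun x => y x 0) (fun x => y x 1) := by
  obtain ⟨g, hg, hy, he⟩ := h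
  have h1 : (b₁:ℂ) ≠ 0 := by exact_mod_cast hb₁
  have h2 : (b₂:ℂ) ≠ 0 := by exact_mod_cast hb₂
  have a0 : ACrep (fun x => y x 0) (fun x => g x 0) := ⟨hg 0, fun x hx => hy x hx 0⟩
  have a1 : ACrep (fun x => y x 1) (fun x => g x 1) := ⟨hg 1, fun x hx => hy x hx 1⟩
  constructor
  · refine a0.congr (fun _ _ => rfl) ?_
    filter_upwards [he] with x hx
    rw [← hx.1]
    have : (b₁:ℂ) * (b₁:ℂ)⁻¹ = 1 := mul_inv_cancel₀ h1
    linear_combination (-g x 0) * this + (g x 0 * (b₁:ℂ) * (b₁:ℂ)⁻¹) * I_sq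
  · refine a1.congr (fun _ _ => rfl) ?_
    filter_upwards [he] with x hx
    rw [← hx.2]
    have : (b₂:ℂ) * (b₂:ℂ)⁻¹ = 1 := mul_inv_cancel₀ h2
    linear_combination (-g x 1) * this + (g x 1 * (b₂:ℂ) * (b₂:ℂ)⁻¹) * I_sq

lemma Sys.symm {b₁ b₂ : ℝ} {Q₁₂ Q₂₁ : ℝ → ℂ} {l : ℂ} {y₁ y₂ : ℝ → ℂ}
    (h : Sys b₁ b₂ Q₁₂ Q₂₁ l y₁ y₂) : Sys b₂ b₁ Q₂₁ Q₁₂ l y₂ y₁ := ⟨h.2, h.1⟩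

/-- Asymptotics in the half plane where `e^{i b λ}` dominates `e^{i b' λ}`: dividing by `e^{i b λ x}`
gives the normalised system with `z = i (b' - b) λ`. -/
lemma half_asymp {b b' : ℝ} (hbb : b ≠ b') {p q : ℝ → ℂ} (hp : IntegrableOn p (Icc (0:ℝ) 1))
    (hq : IntegrableOn q (Icc (0:ℝ) 1)) {ε : ℝ} (hε : 0 < ε) :
    ∃ R : ℝ, 0 < R ∧ ∀ l : ℂ, (I * (b' - b) * l).re ≤ 0 → R ≤ ‖l‖ → ∀ y z : ℝ → ℂ,
      Sys b b' p q l y z → ‖y 0‖ ≤ 1 → ‖z 0‖ ≤ 1 →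
      ‖y 1 - Complex.exp (I * b * l) * y 0‖ ≤ ε * ‖Complex.exp (I * b * l)‖ ∧
      ‖z 1 - Complex.exp (I * b' * l) * z 0‖ ≤ ε * ‖Complex.exp (I * b * l)‖ := by
  have hd : 0 < |b' - b| := abs_pos.2 (sub_ne_zero.2 hbb.symm)
  obtain ⟨R, hR, H⟩ := system_asymp (hp.const_mul (-(I * b))) (hq.const_mul (-(I * b'))) hε
  refine ⟨R / |b' - b|, by positivity, ?_⟩
  intro l hl hlR y z hs hy hz
  have hn : ‖I * ((b':ℂ) - b) * l‖ = |b' - b| * ‖l‖ := by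
    rw [norm_mul, norm_mul, norm_I, one_mul, ← ofReal_sub, norm_real, Real.norm_eq_abs]
  have hE := ACrep.exp (-(I * b * l))
  have hu := hE.mul hs.1
  have hw := hE.mul hs.2
  have key := H (I * (b' - b) * l) hl
    (by rw [hn]; rw [div_le_iff₀ hd] at hlR; linarith)
    (fun x => Complex.exp (-(I * b * l) * x) * y x) (fun x => Complex.exp (-(I * b * l) * x) * z x)
    (hu.congr (fun _ _ => rfl) (ae_of_all _ fun t => by ring))
    (hw.congr (fun _ _ => rfl) (ae_of_all _ fun t => by ring))
    (by simpa using hy) (by simpa using hz)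
  simp only [ofReal_one, mul_one, ofReal_zero, mul_zero, Complex.exp_zero, one_mul] at key
  have e1 : Complex.exp (I * b * l) * Complex.exp (-(I * b * l)) = 1 := by
    rw [← Complex.exp_add]; simp
  have e2 : Complex.exp (I * b * l) * Complex.exp (I * (b' - b) * l) = Complex.exp (I * b' * l) := by
    rw [← Complex.exp_add]; ring_nf
  constructor
  · have : y 1 - Complex.exp (I * b * l) * y 0 =
        (Complex.exp (-(I * b * l)) * y 1 - y 0) * Complex.exp (I * b * l) := by
      linear_combination -(y 1) * e1
    rw [this, norm_mul]
    exact mul_le_mul_of_nonneg_right key.1 (norm_nonneg _)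
  · have : z 1 - Complex.exp (I * b' * l) * z 0 =
        (Complex.exp (-(I * b * l)) * z 1 - Complex.exp (I * (b' - b) * l) * z 0) *
          Complex.exp (I * b * l) := by
      linear_combination -(z 1) * e1 + z 0 * e2
    rw [this, norm_mul]
    exact mul_le_mul_of_nonneg_right key.2 (norm_nonneg _)

/-- The growth weight `|e^{i b₁ λ}| + |e^{i b₂ λ}|`. -/
def wgt (b₁ b₂ : ℝ) (l : ℂ) : ℝ :=
  ‖Complex.exp (I * b₁ * l)‖ + ‖Complex.exp (I * b₂ * l)‖

/-- Both half planes together: away from the origin every solution with bounded initial data is close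
to the free one, relative to the weight. -/
lemma sol_asymp {b₁ b₂ : ℝ} (hb : b₁ < b₂) {p q : ℝ → ℂ} (hp : IntegrableOn p (Icc (0:ℝ) 1))
    (hq : IntegrableOn q (Icc (0:ℝ) 1)) {ε : ℝ} (hε : 0 < ε) :
    ∃ R : ℝ, 0 < R ∧ ∀ l : ℂ, R ≤ ‖l‖ → ∀ y z : ℝ → ℂ,
      Sys b₁ b₂ p q l y z → ‖y 0‖ ≤ 1 → ‖z 0‖ ≤ 1 →
      ‖y 1 - Complex.exp (I * b₁ * l) * y 0‖ ≤ ε * wgt b₁ b₂ l ∧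
      ‖z 1 - Complex.exp (I * b₂ * l) * z 0‖ ≤ ε * wgt b₁ b₂ l := by
  obtain ⟨R₁, hR₁, H₁⟩ := half_asymp hb.ne hp hq hε
  obtain ⟨R₂, hR₂, H₂⟩ := half_asymp hb.ne' hq hp hε
  refine ⟨max R₁ R₂, by positivity, ?_⟩
  intro l hl y z hs hy hz
  have hre : ∀ c d : ℝ, (I * ((c:ℂ) - d) * l).re = -((c - d) * l.im) := by
    intro c d
    rw [← ofReal_sub, mul_assoc, I_mul_re, im_ofReal_mul]
  have n1 := norm_nonneg (Complex.exp (I * b₁ * l))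
  have n2 := norm_nonneg (Complex.exp (I * b₂ * l))
  rcases le_total 0 l.im with him | him
  · obtain ⟨k1, k2⟩ := H₁ l (by rw [hre]; nlinarith) ((le_max_left _ _).trans hl) y z hs hy hz
    have hw : ε * ‖Complex.exp (I * b₁ * l)‖ ≤ ε * wgt b₁ b₂ l := by
      unfold wgt; gcongr; linarith
    exact ⟨k1.trans hw, k2.trans hw⟩
  · obtain ⟨k1, k2⟩ := H₂ l (by rw [hre]; nlinarith) ((le_max_right _ _).trans hl) z y hs.symm hz hy
    have hw : ε * ‖Complex.exp (I * b₂ * l)‖ ≤ ε * wgt b₁ b₂ l := by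
      unfold wgt; gcongr; linarith
    exact ⟨k2.trans hw, k1.trans hw⟩

/-- The bracket `y₁ z₂ - y₂ z₁` of solutions at `l` and at `l + h` does not see the potential,
because the contributions of `Q` cancel; only a term of order `h` remains. -/
lemma Sys.bracket {b₁ b₂ : ℝ} {Q₁₂ Q₂₁ : ℝ → ℂ} {l h : ℂ} {y₁ y₂ z₁ z₂ : ℝ → ℂ}
    (hy : Sys b₁ b₂ Q₁₂ Q₂₁ l y₁ y₂) (hz : Sys b₁ b₂ Q₁₂ Q₂₁ (l + h) z₁ z₂) {x : ℝ}
    (hx : x ∈ Icc (0:ℝ) 1) :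
    y₁ x * z₂ x - y₂ x * z₁ x =
      Complex.exp (I * (b₁ + b₂) * l * x) * (y₁ 0 * z₂ 0 - y₂ 0 * z₁ 0) +
      ∫ t in (0:ℝ)..x, Complex.exp (I * (b₁ + b₂) * l * (x - t)) *
        (I * h * (b₂ * (y₁ t * z₂ t) - b₁ * (y₂ t * z₁ t))) := by
  have h1 := (hy.1.mul hz.2).sub (hy.2.mul hz.1)
  exact duhamel (w := fun x => y₁ x * z₂ x - y₂ x * z₁ x)
    (h := fun t => I * h * (b₂ * (y₁ t * z₂ t) - b₁ * (y₂ t * z₁ t)))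
    (h1.congr (fun _ _ => rfl) (ae_of_all _ fun t => by ring)) hx

section fund
variable {b₁ b₂ : ℝ} {Q₁₂ Q₂₁ : ℝ → ℂ} {Φ : ℂ → ℝ → Fin 2 → Fin 2 → ℂ}

lemma IsFundSol.sys (hb₁ : b₁ ≠ 0) (hb₂ : b₂ ≠ 0) (hΦ : IsFundSol b₁ b₂ Q₁₂ Q₂₁ Φ) (l : ℂ)
    (k : Fin 2) : Sys b₁ b₂ Q₁₂ Q₂₁ l (fun x => Φ l x 0 k) (fun x => Φ l x 1 k) :=
  ((hΦ l).2 k).sys hb₁ hb₂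

lemma IsFundSol.liouville (hb₁ : b₁ ≠ 0) (hb₂ : b₂ ≠ 0) (hΦ : IsFundSol b₁ b₂ Q₁₂ Q₂₁ Φ) (l : ℂ)
    {x : ℝ} (hx : x ∈ Icc (0:ℝ) 1) :
    Φ l x 0 0 * Φ l x 1 1 - Φ l x 1 0 * Φ l x 0 1 = Complex.exp (I * (b₁ + b₂) * l * x) := by
  have := (hΦ.sys hb₁ hb₂ l 0).bracket (h := 0) (by simpa using hΦ.sys hb₁ hb₂ l 1) hx
  rw [this, (hΦ l).1, (hΦ l).1, (hΦ l).1, (hΦ l).1]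
  simp

/-- By Liouville's formula the quadratic part of `Δ` is explicit, so `Δ` is affine in the entries of
`Φ(1, λ)`. -/
lemma charDet_expand (hb₁ : b₁ ≠ 0) (hb₂ : b₂ ≠ 0) (hΦ : IsFundSol b₁ b₂ Q₁₂ Q₂₁ Φ)
    (aM : Fin 2 → Fin 4 → ℂ) (l : ℂ) :
    charDet aM Φ l = Jdet aM 0 1 + Jdet aM 2 3 * Complex.exp (I * (b₁ + b₂) * l) +
      Jdet aM 2 1 * Φ l 1 0 0 + Jdet aM 0 3 * Φ l 1 1 1 +
      Jdet aM 0 2 * Φ l 1 0 1 + Jdet aM 3 1 * Φ l 1 1 0 := by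
  have h := hΦ.liouville hb₁ hb₂ l one_mem01
  rw [ofReal_one, mul_one] at h
  rw [← h]
  simp only [charDet, bform, (hΦ l).1, Jdet]
  simp
  ring

/-- `Δ = Δ₀ + o(|e^{i b₁ λ}| + |e^{i b₂ λ}|)` as `|λ| → ∞` in the whole plane. -/
lemma charDet_asymp (hb₁ : b₁ < 0) (hb₂ : 0 < b₂) (hQ₁₂ : IntegrableOn Q₁₂ (Icc (0:ℝ) 1))
    (hQ₂₁ : IntegrableOn Q₂₁ (Icc (0:ℝ) 1)) (hΦ : IsFundSol b₁ b₂ Q₁₂ Q₂₁ Φ)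
    (aM : Fin 2 → Fin 4 → ℂ) {ε : ℝ} (hε : 0 < ε) :
    ∃ R : ℝ, 0 < R ∧ ∀ l : ℂ, R ≤ ‖l‖ →
      ‖charDet aM Φ l - Delta0 b₁ b₂ aM l‖ ≤ ε * wgt b₁ b₂ l := by
  set S := ‖Jdet aM 2 1‖ + ‖Jdet aM 0 3‖ + ‖Jdet aM 0 2‖ + ‖Jdet aM 3 1‖ with hS
  have hS0 : 0 ≤ S := by positivity
  obtain ⟨R, hR, H⟩ := sol_asymp (hb₁.trans hb₂) hQ₁₂ hQ₂₁ (ε := ε / (S + 1)) (by positivity)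
  refine ⟨R, hR, fun l hl => ?_⟩
  have k0 := H l hl _ _ (hΦ.sys hb₁.ne hb₂.ne' l 0) (by simp [(hΦ l).1]) (by simp [(hΦ l).1])
  have k1 := H l hl _ _ (hΦ.sys hb₁.ne hb₂.ne' l 1) (by simp [(hΦ l).1]) (by simp [(hΦ l).1])
  simp only [(hΦ l).1] at k0 k1
  simp at k0 k1
  have hw : 0 ≤ wgt b₁ b₂ l := by unfold wgt; positivity
  set η := ε / (S + 1) * wgt b₁ b₂ l with hη
  have hη0 : 0 ≤ η := by positivity
  have e : charDet aM Φ l - Delta0 b₁ b₂ aM l =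
      Jdet aM 2 1 * (Φ l 1 0 0 - Complex.exp (I * b₁ * l)) +
      Jdet aM 0 3 * (Φ l 1 1 1 - Complex.exp (I * b₂ * l)) +
      Jdet aM 0 2 * Φ l 1 0 1 + Jdet aM 3 1 * Φ l 1 1 0 := by
    rw [charDet_expand hb₁.ne hb₂.ne' hΦ, Delta0]; ring
  have m : ∀ a c : ℂ, ‖c‖ ≤ η → ‖a * c‖ ≤ ‖a‖ * η := fun a c hc => by
    rw [norm_mul]; gcongr
  have hle : ‖charDet aM Φ l - Delta0 b₁ b₂ aM l‖ ≤ S * η := by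
    rw [e]
    refine (norm_add_le _ _).trans ?_
    refine (add_le_add_left ((norm_add_le _ _).trans (add_le_add_left (norm_add_le _ _) _)) _).trans ?_
    have := m (Jdet aM 2 1) _ k0.1
    have := m (Jdet aM 0 3) _ k1.2
    have := m (Jdet aM 0 2) _ k1.1
    have := m (Jdet aM 3 1) _ k0.2
    rw [hS]
    linarith
  refine hle.trans ?_
  rw [hη, ← mul_assoc]
  gcongr
  rw [mul_div_assoc', div_le_iff₀ (by positivity)]
  nlinarith

end fund

/-! ### The characteristic determinant is entire -/

/-- Gronwall bound for the inhomogeneous system, uniform for `‖l‖ ≤ L`. -/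
lemma sys_gronwall (b₁ b₂ : ℝ) {Q₁₂ Q₂₁ : ℝ → ℂ} (hQ₁₂ : IntegrableOn Q₁₂ (Icc (0:ℝ) 1))
    (hQ₂₁ : IntegrableOn Q₂₁ (Icc (0:ℝ) 1)) {L : ℝ} (hL : 0 ≤ L) :
    ∃ M : ℝ, 0 < M ∧ ∀ l : ℂ, ‖l‖ ≤ L → ∀ (d₁ d₂ r₁ r₂ : ℝ → ℂ) (C : ℝ), 0 ≤ C →
      ACrep d₁ (fun t => I * b₁ * (l * d₁ t - Q₁₂ t * d₂ t) + r₁ t) →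
      ACrep d₂ (fun t => I * b₂ * (l * d₂ t - Q₂₁ t * d₁ t) + r₂ t) →
      (∀ t ∈ Icc (0:ℝ) 1, ‖r₁ t‖ ≤ C) → (∀ t ∈ Icc (0:ℝ) 1, ‖r₂ t‖ ≤ C) →
      ‖d₁ 0‖ ≤ C → ‖d₂ 0‖ ≤ C → ∀ x ∈ Icc (0:ℝ) 1, ‖d₁ x‖ ≤ M * C ∧ ‖d₂ x‖ ≤ M * C := by
  set k : ℝ → ℝ := fun t => |b₁| * (L + ‖Q₁₂ t‖) + |b₂| * (L + ‖Q₂₁ t‖) with hkd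
  have hc : IntegrableOn (fun _ : ℝ => L) (Icc (0:ℝ) 1) := continuousOn_const.integrableOn_Icc
  have hk : IntegrableOn k (Icc (0:ℝ) 1) :=
    ((hc.add hQ₁₂.norm).const_mul _).add ((hc.add hQ₂₁.norm).const_mul _)
  obtain ⟨M, hM, hG⟩ := gronwall_L1 hk (fun t => by positivity)
  refine ⟨M * 4, by positivity, ?_⟩
  intro l hl d₁ d₂ r₁ r₂ C hC h₁ h₂ hr₁ hr₂ h10 h20
  have hs : ContinuousOn (fun t => ‖d₁ t‖ + ‖d₂ t‖) (Icc 0 1) :=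
    h₁.continuousOn.norm.add h₂.continuousOn.norm
  have hi1 : IntegrableOn (fun t => |b₁| * (L * ‖d₁ t‖ + ‖Q₁₂ t‖ * ‖d₂ t‖) + C) (Icc (0:ℝ) 1) := by
    have a := (h₁.continuousOn.norm.integrableOn_Icc (μ := volume)).const_mul L
    have b := (h₂.integrableOn_mul hQ₁₂).norm
    simp only [norm_mul] at b
    have c : IntegrableOn (fun _ : ℝ => C) (Icc (0:ℝ) 1) := continuousOn_const.integrableOn_Icc
    exact ((a.add b).const_mul _).add c
  have hi2 : IntegrableOn (fun t => |b₂| * (L * ‖d₂ t‖ + ‖Q₂₁ t‖ * ‖d₁ t‖) + C) (Icc (0:ℝ) 1) := by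
    have a := (h₂.continuousOn.norm.integrableOn_Icc (μ := volume)).const_mul L
    have b := (h₁.integrableOn_mul hQ₂₁).norm
    simp only [norm_mul] at b
    have c : IntegrableOn (fun _ : ℝ => C) (Icc (0:ℝ) 1) := continuousOn_const.integrableOn_Icc
    exact ((a.add b).const_mul _).add c
  have aux : ∀ (b : ℝ) (q d e r : ℂ), ‖r‖ ≤ C →
      ‖I * b * (l * d - q * e) + r‖ ≤ |b| * (L * ‖d‖ + ‖q‖ * ‖e‖) + C := by
    intro b q d e r hr
    refine (norm_add_le _ _).trans (add_le_add ?_ hr)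
    rw [norm_mul, norm_mul, norm_I, one_mul, norm_real, Real.norm_eq_abs]
    gcongr
    refine (norm_sub_le _ _).trans ?_
    rw [norm_mul, norm_mul]
    gcongr
  have key := hG (fun t => ‖d₁ t‖ + ‖d₂ t‖) (4 * C) hs (fun x _ => by positivity) (by positivity) (by
    intro x hx
    have hsub : ∀ t ∈ Icc (0:ℝ) x, t ∈ Icc (0:ℝ) 1 := fun t ht => ⟨ht.1, ht.2.trans hx.2⟩
    have e1 : ‖d₁ x‖ ≤ C + ∫ t in (0:ℝ)..x, (|b₁| * (L * ‖d₁ t‖ + ‖Q₁₂ t‖ * ‖d₂ t‖) + C) := by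
      rw [h₁.2 x hx]
      refine (norm_add_le _ _).trans (add_le_add h10 ?_)
      exact norm_integral01_le hx hi1 fun t ht => aux _ _ _ _ _ (hr₁ t (hsub t ht))
    have e2 : ‖d₂ x‖ ≤ C + ∫ t in (0:ℝ)..x, (|b₂| * (L * ‖d₂ t‖ + ‖Q₂₁ t‖ * ‖d₁ t‖) + C) := by
      rw [h₂.2 x hx]
      refine (norm_add_le _ _).trans (add_le_add h20 ?_)
      exact norm_integral01_le hx hi2 fun t ht => aux _ _ _ _ _ (hr₂ t (hsub t ht))
    have hki : IntervalIntegrable (fun t => k t * (‖d₁ t‖ + ‖d₂ t‖)) volume 0 x :=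
      intervalIntegrable_of_Icc01 (hk.mul_continuousOn hs isCompact_Icc) zero_mem01 hx
    have hci : IntervalIntegrable (fun _ : ℝ => 2 * C) volume 0 x := by simp
    have h1x := intervalIntegrable_of_Icc01 hi1 zero_mem01 hx
    have h2x := intervalIntegrable_of_Icc01 hi2 zero_mem01 hx
    have h3 := intervalIntegral.integral_mono_on hx.1 (h1x.add h2x) (hki.add hci) (fun t _ => by
      have p1 : 0 ≤ |b₁| * (L * ‖d₂ t‖ + ‖Q₁₂ t‖ * ‖d₁ t‖) := by positivity
      have p2 : 0 ≤ |b₂| * (L * ‖d₁ t‖ + ‖Q₂₁ t‖ * ‖d₂ t‖) := by positivity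
      simp only [hkd]
      linarith)
    rw [intervalIntegral.integral_add h1x h2x, intervalIntegral.integral_add hki hci] at h3
    simp only [intervalIntegral.integral_const, sub_zero, smul_eq_mul] at h3
    have : x * (2 * C) ≤ 2 * C := mul_le_of_le_one_left (by positivity) hx.2
    linarith)
  intro x hx
  have := key x hx
  have h1 := norm_nonneg (d₁ x)
  have h2 := norm_nonneg (d₂ x)
  constructor <;> linarith

lemma hasDerivAt_of_mul_continuousAt {N : ℂ → ℂ} (hN : ContinuousAt N 0) (c : ℂ) :
    HasDerivAt (fun h => c + h * N h) (N 0) 0 := by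
  rw [hasDerivAt_iff_tendsto_slope]
  refine (hN.tendsto.mono_left nhdsWithin_le_nhds).congr' ?_
  filter_upwards [self_mem_nhdsWithin] with h hh
  have : h ≠ 0 := hh
  simp [slope_def_field, this]

section fund
variable {b₁ b₂ : ℝ} {Q₁₂ Q₂₁ : ℝ → ℂ} {Φ : ℂ → ℝ → Fin 2 → Fin 2 → ℂ}

/-- The fundamental matrix is Lipschitz in the spectral parameter, uniformly in `x`. -/
lemma IsFundSol.lipschitz (hb₁ : b₁ ≠ 0) (hb₂ : b₂ ≠ 0) (hQ₁₂ : IntegrableOn Q₁₂ (Icc (0:ℝ) 1))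
    (hQ₂₁ : IntegrableOn Q₂₁ (Icc (0:ℝ) 1)) (hΦ : IsFundSol b₁ b₂ Q₁₂ Q₂₁ Φ) (l : ℂ) :
    ∃ M : ℝ, 0 < M ∧ ∀ h : ℂ, ‖h‖ ≤ 1 → ∀ m : Fin 2, ∀ x ∈ Icc (0:ℝ) 1,
      ‖Φ (l + h) x 0 m - Φ l x 0 m‖ ≤ M * ‖h‖ ∧ ‖Φ (l + h) x 1 m - Φ l x 1 m‖ ≤ M * ‖h‖ := by
  obtain ⟨M, hM, H⟩ := sys_gronwall b₁ b₂ hQ₁₂ hQ₂₁ (L := ‖l‖ + 1) (by positivity)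
  refine ⟨M * ((|b₁| + |b₂|) * M), by positivity, ?_⟩
  intro h hh m
  have hz := hΦ.sys hb₁ hb₂ (l + h) m
  have h0 := hΦ.sys hb₁ hb₂ l m
  have hd : ∀ (l : ℂ) (j : Fin 2), ‖Φ l 0 j m‖ ≤ 1 := by
    intro l j; rw [(hΦ l).1]; split_ifs <;> simp
  have bd := H (l + h) ((norm_add_le _ _).trans (by linarith)) _ _ (fun _ => 0) (fun _ => 0) 1
    zero_le_one (by simpa using hz.1) (by simpa using hz.2) (by simp) (by simp)
    (hd _ _) (hd _ _)
  have e : M * ((|b₁| + |b₂|) * M) * ‖h‖ = M * ((|b₁| + |b₂|) * M * ‖h‖) := by ring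
  rw [e]
  have a1 := hz.1.sub h0.1
  have a2 := hz.2.sub h0.2
  have aux : ∀ (b : ℝ), |b| ≤ |b₁| + |b₂| → ∀ z : ℂ, ‖z‖ ≤ M * 1 →
      ‖I * b * h * z‖ ≤ (|b₁| + |b₂|) * M * ‖h‖ := by
    intro b hb z hz
    rw [norm_mul, norm_mul, norm_mul, norm_I, one_mul, norm_real, Real.norm_eq_abs]
    calc |b| * ‖h‖ * ‖z‖ ≤ (|b₁| + |b₂|) * ‖h‖ * (M * 1) := by gcongr
      _ = _ := by ring
  refine H l (by linarith) (fun x => Φ (l + h) x 0 m - Φ l x 0 m)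
    (fun x => Φ (l + h) x 1 m - Φ l x 1 m)
    (fun t => I * b₁ * h * Φ (l + h) t 0 m) (fun t => I * b₂ * h * Φ (l + h) t 1 m)
    ((|b₁| + |b₂|) * M * ‖h‖) (by positivity)
    (a1.congr (fun _ _ => rfl) (ae_of_all _ fun t => by ring))
    (a2.congr (fun _ _ => rfl) (ae_of_all _ fun t => by ring))
    (fun t ht => aux _ (by linarith [abs_nonneg b₂]) _ (bd t ht).1)
    (fun t ht => aux _ (by linarith [abs_nonneg b₁]) _ (bd t ht).2) ?_ ?_
  · simp only [(hΦ _).1, sub_self, norm_zero]; positivity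
  · simp only [(hΦ _).1, sub_self, norm_zero]; positivity

/-- The bracket of the `k`-th column at `l` with the `m`-th column at `l + h` is differentiable
at `h = 0`, since by the bracket identity it is `const + h * N(h)` with `N` continuous at `0`. -/
lemma IsFundSol.bracket_differentiable (hb₁ : b₁ ≠ 0) (hb₂ : b₂ ≠ 0)
    (hQ₁₂ : IntegrableOn Q₁₂ (Icc (0:ℝ) 1))
    (hQ₂₁ : IntegrableOn Q₂₁ (Icc (0:ℝ) 1)) (hΦ : IsFundSol b₁ b₂ Q₁₂ Q₂₁ Φ) (l : ℂ)
    (k m : Fin 2) :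
    DifferentiableAt ℂ (fun h => Φ l 1 0 k * Φ (l + h) 1 1 m - Φ l 1 1 k * Φ (l + h) 1 0 m) 0 := by
  obtain ⟨M, hM, H⟩ := hΦ.lipschitz hb₁ hb₂ hQ₁₂ hQ₂₁ l
  set E : ℝ → ℂ := fun t => Complex.exp (I * (b₁ + b₂) * l * ((1:ℝ) - t)) with hE
  have cE : Continuous E := by fun_prop
  have c0 : ∀ (l : ℂ) (n : Fin 2), ContinuousOn (fun x => Φ l x 0 n) (Icc 0 1) := fun l n =>
    (hΦ.sys hb₁ hb₂ l n).1.continuousOn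
  have c1 : ∀ (l : ℂ) (n : Fin 2), ContinuousOn (fun x => Φ l x 1 n) (Icc 0 1) := fun l n =>
    (hΦ.sys hb₁ hb₂ l n).2.continuousOn
  set g : ℂ → ℝ → ℂ := fun h t => E t * (I *
    (b₂ * (Φ l t 0 k * Φ (l + h) t 1 m) - b₁ * (Φ l t 1 k * Φ (l + h) t 0 m))) with hg
  have cg : ∀ h, ContinuousOn (g h) (Icc 0 1) := by
    intro h
    have := c0 l k; have := c1 l k; have := c0 (l + h) m; have := c1 (l + h) m
    have := cE.continuousOn (s := Icc 0 1)
    fun_prop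
  set N : ℂ → ℂ := fun h => ∫ t in (0:ℝ)..1, g h t with hN
  obtain ⟨A, hA⟩ := isCompact_Icc.exists_bound_of_continuousOn
    (((cE.continuousOn (s := Icc 0 1)).norm.mul
      (((c0 l k).norm.const_mul |b₂|).add ((c1 l k).norm.const_mul |b₁|))))
  have hlip : ∀ h : ℂ, ‖h‖ ≤ 1 → ‖N h - N 0‖ ≤ A * (M * ‖h‖) := by
    intro h hh
    have i1 : ∀ h, IntervalIntegrable (g h) volume 0 1 := fun h =>
      ContinuousOn.intervalIntegrable (by rw [uIcc01]; exact cg h)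
    rw [hN, ← intervalIntegral.integral_sub (i1 h) (i1 0)]
    have := intervalIntegral.norm_integral_le_of_norm_le_const (a := (0:ℝ)) (b := 1)
      (f := fun t => g h t - g 0 t) (C := A * (M * ‖h‖)) (by
        intro t ht
        have ht' : t ∈ Icc (0:ℝ) 1 := by
          rw [uIoc_of_le zero_le_one] at ht; exact ⟨ht.1.le, ht.2⟩
        have e : g h t - g 0 t = E t * (I * (b₂ * (Φ l t 0 k * (Φ (l + h) t 1 m - Φ l t 1 m)) -
            b₁ * (Φ l t 1 k * (Φ (l + h) t 0 m - Φ l t 0 m)))) := by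
          simp only [hg, add_zero]; ring
        have hA' := hA t ht'
        rw [Real.norm_eq_abs] at hA'
        have hA' := (le_abs_self _).trans hA'
        obtain ⟨k0, k1⟩ := H h hh m t ht'
        calc ‖g h t - g 0 t‖ ≤ ‖E t‖ * (|b₂| * (‖Φ l t 0 k‖ * (M * ‖h‖)) +
              |b₁| * (‖Φ l t 1 k‖ * (M * ‖h‖))) := by
              rw [e, norm_mul, norm_mul, norm_I, one_mul]
              gcongr
              refine (norm_sub_le _ _).trans ?_
              simp only [norm_mul, norm_real, Real.norm_eq_abs]
              gcongr
          _ = ‖E t‖ * (|b₂| * ‖Φ l t 0 k‖ + |b₁| * ‖Φ l t 1 k‖) * (M * ‖h‖) := by ring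
          _ ≤ A * (M * ‖h‖) := by gcongr; exact hA')
    simpa using this
  have hcont : ContinuousAt N 0 := by
    rw [ContinuousAt, tendsto_iff_norm_sub_tendsto_zero]
    have hev : ∀ᶠ h : ℂ in nhds 0, ‖h‖ ≤ 1 := by
      filter_upwards [Metric.closedBall_mem_nhds (0:ℂ) one_pos] with h hh
      simpa using hh
    refine squeeze_zero' (Eventually.of_forall fun _ => norm_nonneg _)
      (hev.mono fun h hh => hlip h hh) ?_
    have : Continuous fun h : ℂ => A * (M * ‖h‖) := by fun_prop
    simpa using this.tendsto 0
  have hder := hasDerivAt_of_mul_continuousAt hcont (Complex.exp (I * (b₁ + b₂) * l * (1:ℝ)) *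
    (Φ l 0 0 k * Φ l 0 1 m - Φ l 0 1 k * Φ l 0 0 m))
  refine hder.differentiableAt.congr_of_eventuallyEq (Eventually.of_forall fun h => ?_)
  have hb := (hΦ.sys hb₁ hb₂ l k).bracket (hΦ.sys hb₁ hb₂ (l + h) m) one_mem01
  simp only at hb ⊢
  rw [hb, hN, ← intervalIntegral.integral_const_mul]
  simp only [(hΦ _).1]
  congr 1
  refine intervalIntegral.integral_congr fun t _ => ?_
  simp only [hg, hE]
  ring

/-- The column at `l + h` is recovered from its brackets with the two columns at `l` by Cramer's rule;
the determinant is nonzero by Liouville's formula. -/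
lemma IsFundSol.differentiable (hb₁ : b₁ ≠ 0) (hb₂ : b₂ ≠ 0)
    (hQ₁₂ : IntegrableOn Q₁₂ (Icc (0:ℝ) 1))
    (hQ₂₁ : IntegrableOn Q₂₁ (Icc (0:ℝ) 1)) (hΦ : IsFundSol b₁ b₂ Q₁₂ Q₂₁ Φ) (j m : Fin 2) :
    Differentiable ℂ (fun l => Φ l 1 j m) := by
  intro l
  have d0 := hΦ.bracket_differentiable hb₁ hb₂ hQ₁₂ hQ₂₁ l 0 m
  have d1 := hΦ.bracket_differentiable hb₁ hb₂ hQ₁₂ hQ₂₁ l 1 m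
  have hD := hΦ.liouville hb₁ hb₂ l one_mem01
  have hne : Φ l 1 0 0 * Φ l 1 1 1 - Φ l 1 1 0 * Φ l 1 0 1 ≠ 0 := by
    rw [hD]; exact Complex.exp_ne_zero _
  have hz : DifferentiableAt ℂ (fun h => Φ (l + h) 1 j m) 0 := by
    have h := ((d0.const_mul (Φ l 1 j 1)).sub (d1.const_mul (Φ l 1 j 0))).div_const
      (Φ l 1 0 0 * Φ l 1 1 1 - Φ l 1 1 0 * Φ l 1 0 1)
    refine h.congr_of_eventuallyEq (Eventually.of_forall fun h => ?_)
    simp only [Pi.sub_apply]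
    rw [eq_div_iff hne]
    fin_cases j <;> simp <;> ring
  have hc : DifferentiableAt ℂ (fun x : ℂ => x - l) l := by fun_prop
  have := DifferentiableAt.comp (g := fun h => Φ (l + h) 1 j m) (f := fun x : ℂ => x - l) l
    (by simpa using hz) hc
  refine this.congr_of_eventuallyEq (Eventually.of_forall fun x => ?_)
  simp

lemma charDet_differentiable (hb₁ : b₁ ≠ 0) (hb₂ : b₂ ≠ 0)
    (hQ₁₂ : IntegrableOn Q₁₂ (Icc (0:ℝ) 1))
    (hQ₂₁ : IntegrableOn Q₂₁ (Icc (0:ℝ) 1)) (hΦ : IsFundSol b₁ b₂ Q₁₂ Q₂₁ Φ)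
    (aM : Fin 2 → Fin 4 → ℂ) : Differentiable ℂ (charDet aM Φ) := by
  have h := fun j m => hΦ.differentiable hb₁ hb₂ hQ₁₂ hQ₂₁ j m
  have h00 := h 0 0; have h01 := h 0 1; have h10 := h 1 0; have h11 := h 1 1
  have : charDet aM Φ = fun l => Jdet aM 0 1 + Jdet aM 2 3 * Complex.exp (I * (b₁ + b₂) * l) +
      Jdet aM 2 1 * Φ l 1 0 0 + Jdet aM 0 3 * Φ l 1 1 1 +
      Jdet aM 0 2 * Φ l 1 0 1 + Jdet aM 3 1 * Φ l 1 1 0 :=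
    funext (charDet_expand hb₁ hb₂ hΦ aM)
  rw [this]
  fun_prop

lemma Delta0_differentiable (b₁ b₂ : ℝ) (aM : Fin 2 → Fin 4 → ℂ) :
    Differentiable ℂ (Delta0 b₁ b₂ aM) := by
  unfold Delta0; fun_prop

end fund

/-! ### Rouché's theorem for rectangles -/

/-- The integral of `f` along the positively oriented boundary of `[a,b] × [c,d]`. -/
def rint (f : ℂ → ℂ) (a b c d : ℝ) : ℂ :=
  (∫ x in a..b, f (x + c * I)) - (∫ x in a..b, f (x + d * I)) +
    I * (∫ y in c..d, f (b + y * I)) - I * (∫ y in c..d, f (a + y * I))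

/-- The boundary of the rectangle `[a,b] × [c,d]`. -/
def bdry (a b c d : ℝ) : Set ℂ :=
  {z | z.re ∈ Icc a b ∧ z.im ∈ Icc c d ∧ (z.re = a ∨ z.re = b ∨ z.im = c ∨ z.im = d)}

/-- The open rectangle `(a,b) × (c,d)`. -/
def orect (a b c d : ℝ) : Set ℂ := {z | z.re ∈ Ioo a b ∧ z.im ∈ Ioo c d}

section rect
variable {a b c d : ℝ}

lemma hor_mem (hcd : c ≤ d) {x : ℝ} (hx : x ∈ Icc a b) :
    ((x:ℂ) + c * I) ∈ bdry a b c d ∧ ((x:ℂ) + d * I) ∈ bdry a b c d := by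
  simp only [bdry, mem_ofPred_eq, add_re, ofReal_re, mul_re, I_re, mul_zero, ofReal_im, I_im,
    mul_one, sub_self, add_zero, add_im, mul_im, zero_add]
  simp [hcd, hx.1, hx.2]

lemma ver_mem (hab : a ≤ b) {y : ℝ} (hy : y ∈ Icc c d) :
    ((a:ℂ) + y * I) ∈ bdry a b c d ∧ ((b:ℂ) + y * I) ∈ bdry a b c d := by
  simp only [bdry, mem_ofPred_eq, add_re, ofReal_re, mul_re, I_re, mul_zero, ofReal_im, I_im,
    mul_one, sub_self, add_zero, add_im, mul_im, zero_add]
  simp [hab, hy.1, hy.2]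

lemma hor_int (hab : a ≤ b) (hcd : c ≤ d) {f : ℂ → ℂ} (hf : ContinuousOn f (bdry a b c d)) :
    IntervalIntegrable (fun x : ℝ => f (x + c * I)) volume a b ∧
    IntervalIntegrable (fun x : ℝ => f (x + d * I)) volume a b := by
  constructor
  · refine ContinuousOn.intervalIntegrable (hf.comp (by fun_prop) fun x hx => ?_)
    rw [uIcc_of_le hab] at hx
    exact (hor_mem hcd hx).1
  · refine ContinuousOn.intervalIntegrable (hf.comp (by fun_prop) fun x hx => ?_)
    rw [uIcc_of_le hab] at hx
    exact (hor_mem hcd hx).2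

lemma ver_int (hab : a ≤ b) (hcd : c ≤ d) {f : ℂ → ℂ} (hf : ContinuousOn f (bdry a b c d)) :
    IntervalIntegrable (fun y : ℝ => f (a + y * I)) volume c d ∧
    IntervalIntegrable (fun y : ℝ => f (b + y * I)) volume c d := by
  constructor
  · refine ContinuousOn.intervalIntegrable (hf.comp (by fun_prop) fun x hx => ?_)
    rw [uIcc_of_le hcd] at hx
    exact (ver_mem hab hx).1
  · refine ContinuousOn.intervalIntegrable (hf.comp (by fun_prop) fun x hx => ?_)
    rw [uIcc_of_le hcd] at hx
    exact (ver_mem hab hx).2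

lemma rint_congr (hab : a ≤ b) (hcd : c ≤ d) {f g : ℂ → ℂ} (h : ∀ z ∈ bdry a b c d, f z = g z) :
    rint f a b c d = rint g a b c d := by
  unfold rint
  congr 1
  · congr 1
    · congr 1
      · refine intervalIntegral.integral_congr fun x hx => ?_
        rw [uIcc_of_le hab] at hx
        exact h _ (hor_mem hcd hx).1
      · refine intervalIntegral.integral_congr fun x hx => ?_
        rw [uIcc_of_le hab] at hx
        exact h _ (hor_mem hcd hx).2
    · congr 1
      refine intervalIntegral.integral_congr fun x hx => ?_
      rw [uIcc_of_le hcd] at hx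
      exact h _ (ver_mem hab hx).2
  · congr 1
    refine intervalIntegral.integral_congr fun x hx => ?_
    rw [uIcc_of_le hcd] at hx
    exact h _ (ver_mem hab hx).1

lemma rint_add (hab : a ≤ b) (hcd : c ≤ d) {f g : ℂ → ℂ} (hf : ContinuousOn f (bdry a b c d))
    (hg : ContinuousOn g (bdry a b c d)) :
    rint (fun z => f z + g z) a b c d = rint f a b c d + rint g a b c d := by
  obtain ⟨f1, f2⟩ := hor_int hab hcd hf
  obtain ⟨g1, g2⟩ := hor_int hab hcd hg
  obtain ⟨f3, f4⟩ := ver_int hab hcd hf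
  obtain ⟨g3, g4⟩ := ver_int hab hcd hg
  unfold rint
  rw [intervalIntegral.integral_add f1 g1, intervalIntegral.integral_add f2 g2,
    intervalIntegral.integral_add f3 g3, intervalIntegral.integral_add f4 g4]
  ring

lemma rint_const_mul (k : ℂ) (f : ℂ → ℂ) :
    rint (fun z => k * f z) a b c d = k * rint f a b c d := by
  unfold rint
  simp only [intervalIntegral.integral_const_mul]
  ring

lemma rint_sum (hab : a ≤ b) (hcd : c ≤ d) {ι : Type*} (S : Finset ι) {f : ι → ℂ → ℂ}
    (hf : ∀ i ∈ S, ContinuousOn (f i) (bdry a b c d)) :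
    rint (fun z => ∑ i ∈ S, f i z) a b c d = ∑ i ∈ S, rint (f i) a b c d := by
  classical
  induction S using Finset.induction_on with
  | empty => simp [rint]
  | insert i S hi ih =>
    simp only [Finset.sum_insert hi]
    rw [rint_add hab hcd (hf i (by simp)) (continuousOn_finsetSum _ fun j hj => hf j (by simp [hj])),
      ih fun j hj => hf j (by simp [hj])]

lemma hor_ftc {L φ : ℂ → ℂ} {a b e : ℝ} (hab : a ≤ b)
    (hL : ∀ x ∈ Icc a b, HasDerivAt L (φ (x + e * I)) (x + e * I))
    (hi : IntervalIntegrable (fun x : ℝ => φ (x + e * I)) volume a b) :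
    ∫ x in a..b, φ (x + e * I) = L (b + e * I) - L (a + e * I) := by
  refine intervalIntegral.integral_eq_sub_of_hasDerivAt (f := fun x : ℝ => L (x + e * I))
    (fun x hx => ?_) hi
  rw [uIcc_of_le hab] at hx
  have h1 : HasDerivAt (fun x : ℝ => (x:ℂ) + e * I) 1 x := by
    simpa using (Complex.ofRealCLM.hasDerivAt (x := x)).add_const (e * I)
  have := (hL x hx).comp x h1
  rw [mul_one] at this
  exact this

lemma ver_ftc {L φ : ℂ → ℂ} {c d e : ℝ} (hcd : c ≤ d)
    (hL : ∀ y ∈ Icc c d, HasDerivAt L (φ (e + y * I)) (e + y * I))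
    (hi : IntervalIntegrable (fun y : ℝ => φ (e + y * I)) volume c d) :
    I * ∫ y in c..d, φ (e + y * I) = L (e + d * I) - L (e + c * I) := by
  rw [← intervalIntegral.integral_const_mul]
  refine intervalIntegral.integral_eq_sub_of_hasDerivAt (f := fun y : ℝ => L (e + y * I))
    (fun x hx => ?_) (hi.const_mul I)
  rw [uIcc_of_le hcd] at hx
  have h1 : HasDerivAt (fun x : ℝ => (e:ℂ) + x * I) I x := by
    simpa using ((Complex.ofRealCLM.hasDerivAt (x := x)).mul_const I).const_add (e:ℂ)
  have := (hL x hx).comp x h1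
  rw [mul_comm] at this
  exact this

lemma rint_eq_zero_of_primitive (hab : a ≤ b) (hcd : c ≤ d) {L φ : ℂ → ℂ}
    (hL : ∀ z ∈ bdry a b c d, HasDerivAt L (φ z) z) (hφ : ContinuousOn φ (bdry a b c d)) :
    rint φ a b c d = 0 := by
  obtain ⟨f1, f2⟩ := hor_int hab hcd hφ
  obtain ⟨f3, f4⟩ := ver_int hab hcd hφ
  unfold rint
  rw [hor_ftc hab (fun x hx => hL _ (hor_mem hcd hx).1) f1,
    hor_ftc hab (fun x hx => hL _ (hor_mem hcd hx).2) f2,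
    ver_ftc hcd (fun x hx => hL _ (ver_mem hab hx).1) f3,
    ver_ftc hcd (fun x hx => hL _ (ver_mem hab hx).2) f4]
  ring

lemma rint_eq_zero_of_differentiable (hab : a ≤ b) (hcd : c ≤ d) {f : ℂ → ℂ}
    (hf : DifferentiableOn ℂ f (Icc a b ×ℂ Icc c d)) : rint f a b c d = 0 := by
  have := Complex.integral_boundary_rect_eq_zero_of_differentiableOn f (⟨a, c⟩ : ℂ) ⟨b, d⟩
    (by simpa [uIcc_of_le hab, uIcc_of_le hcd] using hf)
  simpa [rint, smul_eq_mul] using this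

lemma log_I_mul {v : ℂ} (hv : 0 < v.re) :
    log (I * v) = log v + Real.pi / 2 * I ∧ log (-I * v) = log v - Real.pi / 2 * I := by
  have h0 : v ≠ 0 := by rintro rfl; simp at hv
  have ha := abs_lt.1 (Complex.abs_arg_lt_pi_div_two_iff.2 (Or.inl hv))
  have hp := Real.pi_pos
  constructor
  · rw [(Complex.log_mul_eq_add_log_iff I_ne_zero h0).2, Complex.log_I, add_comm]
    rw [Complex.arg_I]; constructor <;> linarith [ha.1, ha.2]
  · rw [(Complex.log_mul_eq_add_log_iff (neg_ne_zero.2 I_ne_zero) h0).2, Complex.log_neg_I]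
    · ring
    · rw [Complex.arg_neg_I]; constructor <;> linarith [ha.1, ha.2]

/-- A primitive of `1 / (z - p)` in the half plane `Re (k (z - p)) > 0`. -/
lemma hasDerivAt_log_half {k p z : ℂ} (h : 0 < (k * (z - p)).re) :
    HasDerivAt (fun z => log (k * (z - p))) (z - p)⁻¹ z := by
  have hk : k ≠ 0 := by rintro rfl; simp at h
  have hz : z - p ≠ 0 := by intro h0; rw [h0] at h; simp at h
  have h1 : HasDerivAt (fun z => k * (z - p)) k z := by
    simpa using ((hasDerivAt_id z).sub_const p).const_mul k
  have := h1.clog (Or.inl h)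
  convert this using 1
  field_simp

/-- The winding number of the rectangle around an interior point, computed with branches of the
logarithm on the four sides. -/
lemma rint_inv {p : ℂ} (hp : p ∈ orect a b c d) :
    rint (fun z => (z - p)⁻¹) a b c d = 2 * Real.pi * I := by
  obtain ⟨⟨ha, hb⟩, ⟨hc, hd⟩⟩ := hp
  have hab : a ≤ b := (ha.trans hb).le
  have hcd : c ≤ d := (hc.trans hd).le
  have hcont : ContinuousOn (fun z => (z - p)⁻¹) (bdry a b c d) := by
    refine ContinuousOn.inv₀ (by fun_prop) fun z hz h0 => ?_
    rw [sub_eq_zero] at h0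
    subst h0
    rcases hz.2.2 with h | h | h | h <;> linarith
  obtain ⟨f1, f2⟩ := hor_int hab hcd hcont
  obtain ⟨f3, f4⟩ := ver_int hab hcd hcont
  unfold rint
  rw [hor_ftc (L := fun z => log (I * (z - p))) (φ := fun z => (z - p)⁻¹) hab
      (fun x hx => hasDerivAt_log_half (by simp; linarith)) f1,
    hor_ftc (L := fun z => log (-I * (z - p))) (φ := fun z => (z - p)⁻¹) hab
      (fun x hx => hasDerivAt_log_half (by simp; linarith)) f2,
    ver_ftc (L := fun z => log ((1:ℂ) * (z - p))) (φ := fun z => (z - p)⁻¹) hcd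
      (fun x hx => hasDerivAt_log_half (by simp; linarith)) f4,
    ver_ftc (L := fun z => log ((-1:ℂ) * (z - p))) (φ := fun z => (z - p)⁻¹) hcd
      (fun x hx => hasDerivAt_log_half (by simp; linarith)) f3]
  have k1 := (log_I_mul (v := (b + c * I) - p) (by simp; linarith)).1
  have k2 := (log_I_mul (v := (b + d * I) - p) (by simp; linarith)).2
  have k3 := (log_I_mul (v := -((a + d * I) - p)) (by simp; linarith)).1
  have k4 := (log_I_mul (v := -((a + c * I) - p)) (by simp; linarith)).2
  simp only [mul_neg, neg_mul, neg_neg, one_mul] at k1 k2 k3 k4 ⊢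
  rw [k1, k2, k3, k4]
  ring

end rect

lemma order_ne_top {F : ℂ → ℂ} (hF : Differentiable ℂ F) {z₁ : ℂ} (h : F z₁ ≠ 0) (z : ℂ) :
    analyticOrderAt F z ≠ ⊤ := by
  intro ht
  rw [analyticOrderAt_eq_top] at ht
  have := AnalyticOnNhd.eq_of_eventuallyEq (f := F) (g := fun _ => 0) (z₀ := z)
    (fun x _ => hF.analyticAt x) (fun x _ => analyticAt_const) ht
  exact h (by rw [this])

/-- Division of an entire function by its full vanishing factor at one point. -/
lemma factor_one {F : ℂ → ℂ} (hF : Differentiable ℂ F) {a : ℂ} (hne : analyticOrderAt F a ≠ ⊤) :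
    ∃ g : ℂ → ℂ, Differentiable ℂ g ∧ g a ≠ 0 ∧
      ∀ z, F z = (z - a) ^ analyticOrderNatAt F a * g z := by
  set n := analyticOrderNatAt F a with hn
  obtain ⟨g₀, hg₀, hga, hev⟩ := ((hF.analyticAt a).analyticOrderAt_eq_natCast (n := n)).1
    (Nat.cast_analyticOrderNatAt hne).symm
  set g : ℂ → ℂ := fun z => if z = a then g₀ a else F z / (z - a) ^ n with hg
  have hgg : g =ᶠ[nhds a] g₀ := by
    filter_upwards [hev] with z hz
    by_cases hza : z = a
    · simp [hg, hza]
    · have : z - a ≠ 0 := sub_ne_zero.2 hza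
      simp only [hg, hza, if_false, hz, smul_eq_mul]
      field_simp
  refine ⟨g, fun z => ?_, by simpa [hg] using hga, fun z => ?_⟩
  · by_cases hza : z = a
    · rw [hza]
      exact hg₀.differentiableAt.congr_of_eventuallyEq hgg
    · have h0 : (z - a) ^ n ≠ 0 := pow_ne_zero _ (sub_ne_zero.2 hza)
      have : DifferentiableAt ℂ (fun z => F z / (z - a) ^ n) z :=
        (hF z).div (by fun_prop) h0
      refine this.congr_of_eventuallyEq ?_
      filter_upwards [isOpen_ne.mem_nhds hza] with w hw
      have : w ≠ a := hw
      simp [hg, this]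
  · by_cases hza : z = a
    · subst hza
      have := hev.self_of_nhds
      simpa [hg] using this
    · have h0 : (z - a) ^ n ≠ 0 := pow_ne_zero _ (sub_ne_zero.2 hza)
      simp only [hg, hza, if_false]
      field_simp

lemma order_eq_of_factor {F g : ℂ → ℂ} (hg : Differentiable ℂ g) {a b : ℂ} (hab : b ≠ a) {n : ℕ}
    (h : ∀ z, F z = (z - a) ^ n * g z) : analyticOrderAt F b = analyticOrderAt g b := by
  have e : F = (fun z => (z - a) ^ n) * g := funext h
  rw [e, analyticOrderAt_mul (by fun_prop) (hg.analyticAt b)]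
  have : analyticOrderAt (fun z => (z - a) ^ n) b = 0 :=
    analyticOrderAt_eq_zero.2 (Or.inr (pow_ne_zero _ (sub_ne_zero.2 hab)))
  rw [this, zero_add]

lemma factor_finset (S : Finset ℂ) : ∀ F : ℂ → ℂ, Differentiable ℂ F →
    (∀ z, analyticOrderAt F z ≠ ⊤) → ∃ g : ℂ → ℂ, Differentiable ℂ g ∧ (∀ a ∈ S, g a ≠ 0) ∧
      ∀ z, F z = (∏ a ∈ S, (z - a) ^ analyticOrderNatAt F a) * g z := by
  classical
  induction S using Finset.induction_on with
  | empty => intro F hF _; exact ⟨F, hF, by simp, by simp⟩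
  | insert a S ha ih =>
    intro F hF hne
    obtain ⟨g, hg, hga, hFg⟩ := factor_one hF (hne a)
    have hord : ∀ b, b ≠ a → analyticOrderAt F b = analyticOrderAt g b := fun b hb =>
      order_eq_of_factor hg hb hFg
    obtain ⟨h, hh, hhS, hgh⟩ := ih g hg (fun z => by
      by_cases hz : z = a
      · rw [hz, analyticOrderAt_eq_zero.2 (Or.inr hga)]; simp
      · rw [← hord z hz]; exact hne z)
    have hprod : ∀ z, ∏ s ∈ S, (z - s) ^ analyticOrderNatAt F s =
        ∏ s ∈ S, (z - s) ^ analyticOrderNatAt g s := fun z =>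
      Finset.prod_congr rfl fun s hs => by
        have : s ≠ a := fun h => ha (h ▸ hs)
        rw [analyticOrderNatAt, hord s this, analyticOrderNatAt]
    refine ⟨h, hh, fun b hb => ?_, fun z => ?_⟩
    · rcases Finset.mem_insert.1 hb with rfl | hb
      · intro h0
        exact hga (by rw [hgh, h0, mul_zero])
      · exact hhS b hb
    · rw [Finset.prod_insert ha, hprod, mul_assoc, ← hgh, ← hFg]

lemma finite_zeros {F : ℂ → ℂ} (hF : Differentiable ℂ F) {z₁ : ℂ} (h : F z₁ ≠ 0) {K : Set ℂ}
    (hK : IsCompact K) : {z | z ∈ K ∧ F z = 0}.Finite := by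
  by_contra hinf
  obtain ⟨x, -, hx⟩ := Set.Infinite.exists_accPt_of_subset_isCompact hinf hK fun z hz => hz.1
  rw [accPt_iff_frequently_nhdsNE] at hx
  have := AnalyticOnNhd.eq_of_frequently_eq (f := F) (g := fun _ => 0) (z₀ := x)
    (fun x _ => hF.analyticAt x) (fun x _ => analyticAt_const) (hx.mono fun z hz => hz.2)
  exact h (by rw [this])

/-- The zeros of `F` counted with multiplicity: pairs of a point and an index below its order. -/
def Zt (F : ℂ → ℂ) : Type := Σ μ : ℂ, Fin (analyticOrderNatAt F μ)

lemma Zt.zero {F : ℂ → ℂ} (p : Zt F) : F p.1 = 0 :=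
  apply_eq_zero_of_analyticOrderNatAt_ne_zero (fun h => by
    have := p.2.2; omega)

section rouche
variable {a b c d : ℝ}

lemma isCompact_crect : IsCompact (Icc a b ×ℂ Icc c d) := isCompact_Icc.reProdIm isCompact_Icc

lemma mem_crect {z : ℂ} : z ∈ Icc a b ×ℂ Icc c d ↔ z.re ∈ Icc a b ∧ z.im ∈ Icc c d := Iff.rfl

lemma bdry_subset : bdry a b c d ⊆ Icc a b ×ℂ Icc c d := fun _ hz => ⟨hz.1, hz.2.1⟩

/-- The argument principle on a rectangle. -/
lemma arg_principle (hab : a < b) (hcd : c < d) {F : ℂ → ℂ} (hF : Differentiable ℂ F)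
    (hb : ∀ z ∈ bdry a b c d, F z ≠ 0) :
    Finite {p : Zt F // p.1 ∈ orect a b c d} ∧
    rint (logDeriv F) a b c d =
      2 * Real.pi * I * (Nat.card {p : Zt F // p.1 ∈ orect a b c d} : ℂ) := by
  classical
  have hcorner : ((a:ℂ) + c * I) ∈ bdry a b c d := (hor_mem hcd.le ⟨le_rfl, hab.le⟩).1
  have hne := order_ne_top hF (hb _ hcorner)
  have hfin := finite_zeros hF (hb _ hcorner) (isCompact_crect (a := a) (b := b) (c := c) (d := d))
  set S := hfin.toFinset with hS
  have hmem : ∀ z, z ∈ S ↔ (z.re ∈ Icc a b ∧ z.im ∈ Icc c d) ∧ F z = 0 := fun z => by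
    simp [hS, mem_crect]
  have hSo : ∀ z ∈ S, z ∈ orect a b c d := by
    intro z hz
    obtain ⟨⟨hr, hi⟩, h0⟩ := (hmem z).1 hz
    have key : ¬ (z.re = a ∨ z.re = b ∨ z.im = c ∨ z.im = d) := fun h => hb z ⟨hr, hi, h⟩ h0
    push Not at key
    exact ⟨⟨lt_of_le_of_ne hr.1 (Ne.symm key.1), lt_of_le_of_ne hr.2 key.2.1⟩,
      ⟨lt_of_le_of_ne hi.1 (Ne.symm key.2.2.1), lt_of_le_of_ne hi.2 key.2.2.2⟩⟩
  have hoS : ∀ z ∈ orect a b c d, F z = 0 → z ∈ S := fun z hz h0 =>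
    (hmem z).2 ⟨⟨Ioo_subset_Icc_self hz.1, Ioo_subset_Icc_self hz.2⟩, h0⟩
  let e : {p : Zt F // p.1 ∈ orect a b c d} ≃ Σ s : S, Fin (analyticOrderNatAt F s) :=
    { toFun := fun p => ⟨⟨p.1.1, hoS _ p.2 p.1.zero⟩, p.1.2⟩
      invFun := fun q => ⟨⟨q.1, q.2⟩, hSo _ q.1.2⟩
      left_inv := fun p => rfl
      right_inv := fun q => rfl }
  have hcard : Nat.card {p : Zt F // p.1 ∈ orect a b c d} = ∑ s ∈ S, analyticOrderNatAt F s := by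
    rw [Nat.card_congr e, Nat.card_eq_fintype_card, Fintype.card_sigma]
    simp only [Fintype.card_fin]
    exact Finset.sum_coe_sort S (fun s => analyticOrderNatAt F s)
  refine ⟨Finite.of_equiv _ e.symm, ?_⟩
  obtain ⟨g, hg, hgS, hFg⟩ := factor_finset S F hF hne
  have hg0 : ∀ z ∈ Icc a b ×ℂ Icc c d, g z ≠ 0 := by
    intro z hz h0
    have hFz : F z = 0 := by rw [hFg, h0, mul_zero]
    exact hgS z ((hmem z).2 ⟨hz, hFz⟩) h0
  have hsub : ∀ z ∈ bdry a b c d, ∀ s ∈ S, z - s ≠ 0 := by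
    intro z hz s hs h0
    rw [sub_eq_zero] at h0
    exact hb z hz (h0 ▸ ((hmem s).1 hs).2)
  have hFe : F = fun z => (∏ s ∈ S, (z - s) ^ analyticOrderNatAt F s) * g z := funext hFg
  have hlog : ∀ z ∈ bdry a b c d, logDeriv F z =
      (∑ s ∈ S, (analyticOrderNatAt F s : ℂ) * (z - s)⁻¹) + logDeriv g z := by
    intro z hz
    have hpz : ∀ s ∈ S, (z - s) ^ analyticOrderNatAt F s ≠ 0 := fun s hs =>
      pow_ne_zero _ (hsub z hz s hs)
    conv_lhs => rw [hFe]
    rw [logDeriv_mul z (Finset.prod_ne_zero_iff.2 hpz) (hg0 z (bdry_subset hz))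
      (DifferentiableAt.fun_finsetProd fun s _ => by fun_prop) (hg z),
      logDeriv_prod hpz (fun s _ => by fun_prop)]
    congr 1
    refine Finset.sum_congr rfl fun s _ => ?_
    rw [logDeriv_fun_pow (by fun_prop)]
    congr 1
    simp [logDeriv_apply]
  have hci : ∀ s ∈ S, ContinuousOn (fun z => (z - s)⁻¹) (bdry a b c d) := fun s hs =>
    ContinuousOn.inv₀ (by fun_prop) fun z hz => hsub z hz s hs
  have hgd : DifferentiableOn ℂ (logDeriv g) (Icc a b ×ℂ Icc c d) :=
    (hg.deriv.differentiableOn).div hg.differentiableOn hg0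
  rw [rint_congr hab.le hcd.le hlog, rint_add hab.le hcd.le
    (continuousOn_finsetSum _ fun s hs => (hci s hs).const_mul _)
    (hgd.continuousOn.mono bdry_subset), rint_eq_zero_of_differentiable hab.le hcd.le hgd,
    rint_sum hab.le hcd.le S (fun s hs => (hci s hs).const_mul _), add_zero, hcard]
  push_cast
  rw [Finset.mul_sum]
  refine Finset.sum_congr rfl fun s hs => ?_
  rw [rint_const_mul, rint_inv (hSo s hs)]
  ring

/-- Rouché's theorem on a rectangle, as a bijection between zeros counted with multiplicity. -/
lemma rouche (hab : a < b) (hcd : c < d) {F G : ℂ → ℂ} (hF : Differentiable ℂ F)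
    (hG : Differentiable ℂ G) (h : ∀ z ∈ bdry a b c d, ‖F z - G z‖ < ‖G z‖) :
    Finite {p : Zt G // p.1 ∈ orect a b c d} ∧
    Nonempty ({p : Zt G // p.1 ∈ orect a b c d} ≃ {p : Zt F // p.1 ∈ orect a b c d}) := by
  have hG0 : ∀ z ∈ bdry a b c d, G z ≠ 0 := fun z hz h0 => by
    have := h z hz
    rw [h0, norm_zero] at this
    exact absurd this (not_lt.2 (norm_nonneg _))
  have hF0 : ∀ z ∈ bdry a b c d, F z ≠ 0 := fun z hz h0 => by
    have := h z hz
    rw [h0, zero_sub, norm_neg] at this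
    exact lt_irrefl _ this
  obtain ⟨fF, eF⟩ := arg_principle hab hcd hF hF0
  obtain ⟨fG, eG⟩ := arg_principle hab hcd hG hG0
  have cF : ContinuousOn (logDeriv F) (bdry a b c d) :=
    (hF.deriv.continuous.continuousOn).div hF.continuous.continuousOn hF0
  have cG : ContinuousOn (logDeriv G) (bdry a b c d) :=
    (hG.deriv.continuous.continuousOn).div hG.continuous.continuousOn hG0
  have hzero : rint (fun z => logDeriv F z + (-1) * logDeriv G z) a b c d = 0 := by
    refine rint_eq_zero_of_primitive (L := fun z => log (F z / G z)) hab.le hcd.le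
      (fun z hz => ?_) (cF.add (cG.const_mul _))
    have hs : F z / G z ∈ slitPlane := by
      refine Or.inl ?_
      have hlt : ‖F z / G z - 1‖ < 1 := by
        have e : F z / G z - 1 = (F z - G z) / G z := by
          have := hG0 z hz; field_simp
        rw [e, norm_div, div_lt_one (norm_pos_iff.2 (hG0 z hz))]
        exact h z hz
      have := (abs_lt.1 ((Complex.abs_re_le_norm _).trans_lt hlt)).1
      simp only [sub_re, one_re] at this
      linarith
    have hd := (((hF z).hasDerivAt).fun_div ((hG z).hasDerivAt) (hG0 z hz)).clog hs
    convert hd using 1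
    have h1 := hG0 z hz
    have h2 := hF0 z hz
    simp only [logDeriv_apply]
    field_simp
    ring
  rw [rint_add hab.le hcd.le cF (cG.const_mul _), rint_const_mul, eF, eG] at hzero
  have hcard : Nat.card {p : Zt G // p.1 ∈ orect a b c d} =
      Nat.card {p : Zt F // p.1 ∈ orect a b c d} := by
    have h2 : (2 * Real.pi * I : ℂ) ≠ 0 := Complex.two_pi_I_ne_zero
    have : (2 * Real.pi * I : ℂ) * (Nat.card {p : Zt G // p.1 ∈ orect a b c d} : ℂ) =
      2 * Real.pi * I * (Nat.card {p : Zt F // p.1 ∈ orect a b c d} : ℂ) := by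
      linear_combination -hzero
    exact_mod_cast mul_left_cancel₀ h2 this
  exact ⟨fG, ⟨(Finite.equivFin _).trans ((finCongr hcard).trans (Finite.equivFin _).symm)⟩⟩

end rouche

/-! ### Lines on which the perturbation is dominated -/

/-- `Δ₀` is this polynomial evaluated at `(e^{i b₁ λ}, e^{i b₂ λ})`. -/
def PP (A B C D s t : ℂ) : ℂ := A + B * (s * t) + C * s + D * t

lemma PP_swap (A B C D s t : ℂ) : PP A B C D s t = PP A B D C t s := by unfold PP; ring

lemma PP_lower_aux {A B C D s t : ℂ} {K : ℝ} (hC : C ≠ 0)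
    (hK : 2 * (‖A‖ + ‖B‖ + ‖D‖) / ‖C‖ + 1 ≤ K) (hs : K ≤ ‖s‖) (ht : ‖t‖ ≤ K⁻¹) :
    ‖C‖ / 4 * (‖s‖ + ‖t‖) ≤ ‖PP A B C D s t‖ := by
  have hCp : 0 < ‖C‖ := norm_pos_iff.2 hC
  have hK1 : 1 ≤ K := le_trans (by have : 0 ≤ 2 * (‖A‖ + ‖B‖ + ‖D‖) / ‖C‖ := by positivity
                                   linarith) hK
  have hKp : 0 < K := by linarith
  have hk : 2 * (‖A‖ + ‖B‖ + ‖D‖) ≤ ‖C‖ * K := by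
    have : 2 * (‖A‖ + ‖B‖ + ‖D‖) / ‖C‖ ≤ K := by linarith
    rw [div_le_iff₀ hCp] at this
    linarith
  have hKi : K⁻¹ ≤ 1 := inv_le_one_of_one_le₀ hK1
  have hkk : K * K⁻¹ = 1 := mul_inv_cancel₀ hKp.ne'
  have hs1 : 1 ≤ ‖s‖ * K⁻¹ := by
    rw [← hkk]; gcongr
  have e1 : ‖A‖ ≤ ‖A‖ * (‖s‖ * K⁻¹) := le_mul_of_one_le_right (norm_nonneg _) hs1
  have e2 : ‖B‖ * (‖s‖ * ‖t‖) ≤ ‖B‖ * (‖s‖ * K⁻¹) := by gcongr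
  have e3 : ‖D‖ * ‖t‖ ≤ ‖D‖ * (‖s‖ * K⁻¹) := by
    gcongr
    calc ‖t‖ ≤ K⁻¹ := ht
      _ ≤ 1 := hKi
      _ ≤ _ := hs1
  have e4 : (‖A‖ + ‖B‖ + ‖D‖) * (‖s‖ * K⁻¹) ≤ ‖C‖ / 2 * ‖s‖ := by
    have : (‖A‖ + ‖B‖ + ‖D‖) * (‖s‖ * K⁻¹) ≤ (‖C‖ * K / 2) * (‖s‖ * K⁻¹) := by
      gcongr; linarith
    calc _ ≤ _ := this
      _ = ‖C‖ / 2 * ‖s‖ * (K * K⁻¹) := by ring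
      _ = _ := by rw [hkk, mul_one]
  have e5 : ‖t‖ ≤ ‖s‖ := ht.trans (hKi.trans (hK1.trans hs))
  have e6 : ‖C * s‖ ≤ ‖PP A B C D s t‖ + ‖A‖ + ‖B * (s * t)‖ + ‖D * t‖ := by
    have : C * s = PP A B C D s t - A - B * (s * t) - D * t := by unfold PP; ring
    rw [this]
    refine (norm_sub_le _ _).trans ?_
    gcongr
    refine (norm_sub_le _ _).trans ?_
    gcongr
    exact norm_sub_le _ _
  simp only [norm_mul] at e6
  have e7 : ‖C‖ / 4 * ‖t‖ ≤ ‖C‖ / 4 * ‖s‖ := by gcongr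
  nlinarith

/-- When one variable is large and the other small, the polynomial dominates `|s| + |t|`: the linear
term in the large variable beats all others. -/
lemma PP_lower (A B : ℂ) {C D : ℂ} (hC : C ≠ 0) (hD : D ≠ 0) :
    ∃ K c : ℝ, 1 ≤ K ∧ 0 < c ∧ ∀ s t : ℂ, (K ≤ ‖s‖ ∧ ‖t‖ ≤ K⁻¹) ∨ (K ≤ ‖t‖ ∧ ‖s‖ ≤ K⁻¹) →
      c * (‖s‖ + ‖t‖) ≤ ‖PP A B C D s t‖ := by
  have hCp : 0 < ‖C‖ := norm_pos_iff.2 hC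
  have hDp : 0 < ‖D‖ := norm_pos_iff.2 hD
  refine ⟨max (2 * (‖A‖ + ‖B‖ + ‖D‖) / ‖C‖ + 1) (2 * (‖A‖ + ‖B‖ + ‖C‖) / ‖D‖ + 1),
    min (‖C‖ / 4) (‖D‖ / 4), ?_, by positivity, ?_⟩
  · refine le_trans ?_ (le_max_left _ _)
    have : 0 ≤ 2 * (‖A‖ + ‖B‖ + ‖D‖) / ‖C‖ := by positivity
    linarith
  · rintro s t (⟨h1, h2⟩ | ⟨h1, h2⟩)
    · refine le_trans ?_ (PP_lower_aux hC (le_max_left _ _) h1 h2)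
      gcongr
      exact min_le_left _ _
    · rw [PP_swap, add_comm]
      refine le_trans ?_ (PP_lower_aux hD (le_max_right _ _) h1 h2)
      gcongr
      exact min_le_right _ _

lemma norm_exp_I_mul (b : ℝ) (z : ℂ) : ‖Complex.exp (I * b * z)‖ = Real.exp (-b * z.im) := by
  rw [Complex.norm_exp, mul_assoc, I_mul_re, im_ofReal_mul]; ring_nf

/-- For `|y|` large one of the moduli `e^{-b₁ y}`, `e^{-b₂ y}` is large and the other small. -/
lemma exp_far {b₁ b₂ : ℝ} (hb₁ : b₁ < 0) (hb₂ : 0 < b₂) {K : ℝ} (hK : 0 < K) :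
    ∃ H : ℝ, 0 < H ∧ ∀ y : ℝ, (H ≤ y → K ≤ Real.exp (-b₁ * y) ∧ Real.exp (-b₂ * y) ≤ K⁻¹) ∧
      (y ≤ -H → K ≤ Real.exp (-b₂ * y) ∧ Real.exp (-b₁ * y) ≤ K⁻¹) := by
  set m := min (-b₁) b₂ with hm
  have hmp : 0 < m := lt_min (by linarith) hb₂
  have hm1 : m ≤ -b₁ := min_le_left _ _
  have hm2 : m ≤ b₂ := min_le_right _ _
  refine ⟨max (Real.log K / m) 1, by positivity, fun y => ?_⟩
  have hKe : K = Real.exp (Real.log K) := (Real.exp_log hK).symm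
  have hKi : K⁻¹ = Real.exp (-Real.log K) := by rw [Real.exp_neg, Real.exp_log hK]
  rw [hKi]
  have aux : ∀ y : ℝ, max (Real.log K / m) 1 ≤ y → 0 < y ∧ Real.log K ≤ m * y := by
    intro y hy
    refine ⟨lt_of_lt_of_le (by positivity) hy, ?_⟩
    have := (le_max_left _ _).trans hy
    rw [div_le_iff₀ hmp] at this
    linarith
  constructor
  · intro hy
    obtain ⟨h0, h1⟩ := aux y hy
    constructor
    · conv_lhs => rw [hKe]
      refine Real.exp_le_exp.2 ?_
      nlinarith
    · refine Real.exp_le_exp.2 ?_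
      nlinarith
  · intro hy
    obtain ⟨h0, h1⟩ := aux (-y) (by linarith)
    constructor
    · conv_lhs => rw [hKe]
      refine Real.exp_le_exp.2 ?_
      nlinarith
    · refine Real.exp_le_exp.2 ?_
      nlinarith

/-- Uniform positivity over a compact parameter set, when for every parameter one member of a
family of compact sets avoids the zeros. -/
lemma compact_unif {X Y T : Type*} [TopologicalSpace X] [TopologicalSpace Y] {K : Set X}
    (hK : IsCompact K) {S : T → Set Y} {I₀ : Set T} (hS : ∀ t, IsCompact (S t)) {g : X → Y → ℝ}
    (hg : Continuous fun p : X × Y => g p.1 p.2)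
    (h : ∀ k ∈ K, ∃ t ∈ I₀, ∀ y ∈ S t, 0 < g k y) :
    ∃ c : ℝ, 0 < c ∧ ∀ k ∈ K, ∃ t ∈ I₀, ∀ y ∈ S t, c ≤ g k y := by
  refine hK.induction_on (p := fun s => ∃ c : ℝ, 0 < c ∧ ∀ k ∈ s, ∃ t ∈ I₀, ∀ y ∈ S t, c ≤ g k y)
    ⟨1, one_pos, by simp⟩ ?_ ?_ ?_
  · rintro s t hst ⟨c, hc, hct⟩
    exact ⟨c, hc, fun k hk => hct k (hst hk)⟩
  · rintro s t ⟨c, hc, hcs⟩ ⟨c', hc', hct⟩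
    refine ⟨min c c', lt_min hc hc', ?_⟩
    rintro k (hk | hk)
    · obtain ⟨t, ht, h⟩ := hcs k hk
      exact ⟨t, ht, fun y hy => (min_le_left _ _).trans (h y hy)⟩
    · obtain ⟨t, ht, h⟩ := hct k hk
      exact ⟨t, ht, fun y hy => (min_le_right _ _).trans (h y hy)⟩
  · intro k hk
    obtain ⟨t, ht, hpos⟩ := h k hk
    obtain ⟨c, hc, hcy⟩ : ∃ c : ℝ, 0 < c ∧ ∀ y ∈ S t, c < g k y := by
      rcases (S t).eq_empty_or_nonempty with he | hne
      · exact ⟨1, one_pos, by simp [he]⟩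
      · have hcont : ContinuousOn (fun y => g k y) (S t) :=
          (hg.comp (Continuous.prodMk_right k)).continuousOn
        obtain ⟨y₀, hy₀, hmin⟩ := (hS t).exists_isMinOn hne hcont
        refine ⟨g k y₀ / 2, by linarith [hpos y₀ hy₀], fun y hy => ?_⟩
        have := hmin hy
        simp only [mem_ofPred_eq] at this
        linarith [hpos y₀ hy₀]
    have hev : ∀ᶠ k' in nhds k, ∀ y ∈ S t, c < g k' y := by
      refine (hS t).eventually_forall_of_forall_eventually fun y hy => ?_
      exact (hg.tendsto (k, y)).eventually (lt_mem_nhds (hcy y hy))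
    refine ⟨_, mem_nhdsWithin_of_mem_nhds hev, c, hc, fun k' hk' => ⟨t, ht, fun y hy => ?_⟩⟩
    exact (hk' y hy).le

section lines
variable {b₁ b₂ : ℝ} {A B C D : ℂ}

/-- The unperturbed determinant translated to a base point `z₀`, as a function of the displacement
`w`; it depends on `z₀` only through the phases `k = (e^{i b₁ z₀}, e^{i b₂ z₀})`. -/
def Gs (b₁ b₂ : ℝ) (A B C D : ℂ) (k : ℂ × ℂ) (w : ℂ) : ℂ :=
  PP A B C D (k.1 * Complex.exp (I * b₁ * w)) (k.2 * Complex.exp (I * b₂ * w))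

lemma Gs_differentiable (k : ℂ × ℂ) : Differentiable ℂ (Gs b₁ b₂ A B C D k) := by
  unfold Gs PP; fun_prop

lemma Gs_nonzero (hb₁ : b₁ < 0) (hb₂ : 0 < b₂) (hC : C ≠ 0) (hD : D ≠ 0) {k : ℂ × ℂ}
    (h1 : k.1 ≠ 0) (h2 : k.2 ≠ 0) : ∃ w, Gs b₁ b₂ A B C D k w ≠ 0 := by
  obtain ⟨K, c, hK1, hc, H⟩ := PP_lower A B hC hD
  have n1 : 0 < ‖k.1‖ := norm_pos_iff.2 h1
  have n2 : 0 < ‖k.2‖ := norm_pos_iff.2 h2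
  have hKp : 0 < K := by linarith
  obtain ⟨h, hh, Hf⟩ := exp_far hb₁ hb₂ (K := max (K / ‖k.1‖) (K * ‖k.2‖))
    (lt_of_lt_of_le (by positivity) (le_max_left _ _))
  obtain ⟨e1, e2⟩ := (Hf h).1 le_rfl
  refine ⟨h * I, fun h0 => ?_⟩
  have i1 : ‖Complex.exp (I * b₁ * (h * I))‖ = Real.exp (-b₁ * h) := by
    rw [norm_exp_I_mul]; simp
  have i2 : ‖Complex.exp (I * b₂ * (h * I))‖ = Real.exp (-b₂ * h) := by
    rw [norm_exp_I_mul]; simp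
  have := H (k.1 * Complex.exp (I * b₁ * (h * I))) (k.2 * Complex.exp (I * b₂ * (h * I)))
    (Or.inl ⟨by
      rw [norm_mul, i1]
      have := (le_max_left _ _).trans e1
      rw [div_le_iff₀ n1] at this
      linarith, by
      rw [norm_mul, i2]
      have h3 : Real.exp (-b₂ * h) ≤ (K * ‖k.2‖)⁻¹ :=
        e2.trans (inv_anti₀ (by positivity) (le_max_right _ _))
      calc ‖k.2‖ * Real.exp (-b₂ * h) ≤ ‖k.2‖ * (K * ‖k.2‖)⁻¹ := by gcongr
        _ = K⁻¹ := by field_simp⟩)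
  rw [show PP A B C D (k.1 * Complex.exp (I * b₁ * (h * I))) (k.2 * Complex.exp (I * b₂ * (h * I)))
    = 0 from h0, norm_zero] at this
  have p : 0 < ‖k.1 * Complex.exp (I * b₁ * (h * I))‖ :=
    norm_pos_iff.2 (mul_ne_zero h1 (Complex.exp_ne_zero _))
  have q := norm_nonneg (k.2 * Complex.exp (I * b₂ * (h * I)))
  have : 0 < c * (‖k.1 * Complex.exp (I * b₁ * (h * I))‖ +
    ‖k.2 * Complex.exp (I * b₂ * (h * I))‖) := by positivity
  linarith

/-- A nonzero entire function has no zeros on some vertical segment near the left edge of a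
compact rectangle, and on some horizontal segment near its bottom. -/
lemma exists_zero_free {g : ℂ → ℂ} (hg : Differentiable ℂ g) {w₀ : ℂ} (hw : g w₀ ≠ 0) {η : ℝ}
    (hη : 0 < η) (L : ℝ) :
    (∃ t ∈ Icc (0:ℝ) η, ∀ y ∈ Icc (-L) L, g (t + y * I) ≠ 0) ∧
    (∃ s ∈ Icc (0:ℝ) η, ∀ x ∈ Icc (0:ℝ) L, g (x + s * I) ≠ 0) := by
  have hinf : (Icc (0:ℝ) η).Infinite := Icc_infinite hη
  constructor
  · have hfin := finite_zeros hg hw (isCompact_crect (a := 0) (b := η) (c := -L) (d := L))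
    obtain ⟨t, ht, hnot⟩ := (hinf.sdiff (hfin.image Complex.re)).nonempty
    refine ⟨t, ht, fun y hy h0 => hnot ⟨t + y * I, ⟨?_, h0⟩, by simp⟩⟩
    rw [mem_crect]
    simpa using ⟨ht, hy⟩
  · have hfin := finite_zeros hg hw (isCompact_crect (a := 0) (b := L) (c := 0) (d := η))
    obtain ⟨s, hs, hnot⟩ := (hinf.sdiff (hfin.image Complex.im)).nonempty
    refine ⟨s, hs, fun x hx h0 => hnot ⟨x + s * I, ⟨?_, h0⟩, by simp⟩⟩
    rw [mem_crect]
    simpa using ⟨hx, hs⟩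

/-- A compact set containing the phases of all base points in the strip `|Im z| ≤ H`. -/
def phases (b₁ b₂ H : ℝ) : Set (ℂ × ℂ) :=
  {k | (Real.exp (-(|b₁| * H)) ≤ ‖k.1‖ ∧ ‖k.1‖ ≤ Real.exp (|b₁| * H)) ∧
    (Real.exp (-(|b₂| * H)) ≤ ‖k.2‖ ∧ ‖k.2‖ ≤ Real.exp (|b₂| * H))}

lemma phases_compact (b₁ b₂ H : ℝ) : IsCompact (phases b₁ b₂ H) := by
  have h : ∀ b : ℝ, IsCompact {z : ℂ | Real.exp (-(|b| * H)) ≤ ‖z‖ ∧ ‖z‖ ≤ Real.exp (|b| * H)} := by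
    intro b
    refine IsCompact.of_isClosed_subset (isCompact_closedBall (0:ℂ) (Real.exp (|b| * H))) ?_ ?_
    · exact (isClosed_le continuous_const continuous_norm).inter
        (isClosed_le continuous_norm continuous_const)
    · intro z hz
      simpa using hz.2
  exact (h b₁).prod (h b₂)

lemma exp_bounds (b : ℝ) {H : ℝ} {z : ℂ} (hz : |z.im| ≤ H) :
    Real.exp (-(|b| * H)) ≤ ‖Complex.exp (I * b * z)‖ ∧
      ‖Complex.exp (I * b * z)‖ ≤ Real.exp (|b| * H) := by
  rw [norm_exp_I_mul, Real.exp_le_exp, Real.exp_le_exp]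
  have h1 : |(-b) * z.im| ≤ |b| * H := by
    rw [abs_mul, abs_neg]; gcongr
  exact abs_le.1 h1

/-- Since the phases range over a compact set, the lower bound on zero-free segments is uniform over
all base points in a strip, although the zeros of `Δ₀` are not periodic. -/
lemma unif_lines (hb₁ : b₁ < 0) (hb₂ : 0 < b₂) (A B : ℂ) (hC : C ≠ 0) (hD : D ≠ 0) {η : ℝ}
    (hη : 0 < η) (H L : ℝ) :
    ∃ c : ℝ, 0 < c ∧ ∀ k ∈ phases b₁ b₂ H,
      (∃ t ∈ Icc (0:ℝ) η, ∀ y ∈ Icc (-L) L, c ≤ ‖Gs b₁ b₂ A B C D k (t + y * I)‖) ∧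
      (∃ s ∈ Icc (0:ℝ) η, ∀ x ∈ Icc (0:ℝ) L, c ≤ ‖Gs b₁ b₂ A B C D k (x + s * I)‖) := by
  have hz : ∀ k ∈ phases b₁ b₂ H, k.1 ≠ 0 ∧ k.2 ≠ 0 := fun k hk =>
    ⟨norm_pos_iff.1 (lt_of_lt_of_le (Real.exp_pos _) hk.1.1),
      norm_pos_iff.1 (lt_of_lt_of_le (Real.exp_pos _) hk.2.1)⟩
  have hcont : Continuous fun p : (ℂ × ℂ) × ℂ => ‖Gs b₁ b₂ A B C D p.1 p.2‖ := by
    unfold Gs PP; fun_prop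
  obtain ⟨c₁, hc₁, H₁⟩ := compact_unif (phases_compact b₁ b₂ H) (I₀ := Icc (0:ℝ) η)
    (S := fun t : ℝ => (fun y : ℝ => (t + y * I : ℂ)) '' Icc (-L) L)
    (fun t => isCompact_Icc.image (by fun_prop))
    (g := fun k w => ‖Gs b₁ b₂ A B C D k w‖) hcont (fun k hk => by
      obtain ⟨w, hw⟩ := Gs_nonzero (A := A) (B := B) hb₁ hb₂ hC hD (hz k hk).1 (hz k hk).2
      obtain ⟨t, ht, h⟩ := (exists_zero_free (Gs_differentiable k) hw hη L).1
      refine ⟨t, ht, ?_⟩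
      rintro _ ⟨y, hy, rfl⟩
      exact norm_pos_iff.2 (h y hy))
  obtain ⟨c₂, hc₂, H₂⟩ := compact_unif (phases_compact b₁ b₂ H) (I₀ := Icc (0:ℝ) η)
    (S := fun s : ℝ => (fun x : ℝ => (x + s * I : ℂ)) '' Icc (0:ℝ) L)
    (fun t => isCompact_Icc.image (by fun_prop))
    (g := fun k w => ‖Gs b₁ b₂ A B C D k w‖) hcont (fun k hk => by
      obtain ⟨w, hw⟩ := Gs_nonzero (A := A) (B := B) hb₁ hb₂ hC hD (hz k hk).1 (hz k hk).2
      obtain ⟨t, ht, h⟩ := (exists_zero_free (Gs_differentiable k) hw hη L).2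
      refine ⟨t, ht, ?_⟩
      rintro _ ⟨y, hy, rfl⟩
      exact norm_pos_iff.2 (h y hy))
  refine ⟨min c₁ c₂, lt_min hc₁ hc₂, fun k hk => ⟨?_, ?_⟩⟩
  · obtain ⟨t, ht, h⟩ := H₁ k hk
    exact ⟨t, ht, fun y hy => (min_le_left _ _).trans (h _ ⟨y, hy, rfl⟩)⟩
  · obtain ⟨t, ht, h⟩ := H₂ k hk
    exact ⟨t, ht, fun y hy => (min_le_right _ _).trans (h _ ⟨y, hy, rfl⟩)⟩

/-- The scale `η` suffices beyond abscissa `R`: for `|x| ≥ R` there is a vertical line with abscissa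
in `[x, x + η]`, and for each `y` a horizontal segment over `[x, x + 8]` with ordinate in
`[y, y + η]`, on which `‖F - G‖ < ‖G‖`. The length `8` exceeds the width of any column of the
grid constructed below from these lines. -/
def Lines (F G : ℂ → ℂ) (η R : ℝ) : Prop :=
  ∀ x : ℝ, R ≤ |x| →
    (∃ t ∈ Icc x (x + η), ∀ y : ℝ, ‖F (t + y * I) - G (t + y * I)‖ < ‖G (t + y * I)‖) ∧
    (∀ y : ℝ, ∃ s ∈ Icc y (y + η), ∀ t ∈ Icc x (x + 8),
      ‖F (t + s * I) - G (t + s * I)‖ < ‖G (t + s * I)‖)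

/-- The Rouché inequality holds for `|Im z|` large, and at every scale `η` on lines with gaps `η`,
sufficiently far out. -/
lemma good_lines (hb₁ : b₁ < 0) (hb₂ : 0 < b₂) (hC : C ≠ 0) (hD : D ≠ 0) {F G : ℂ → ℂ}
    (hG : ∀ z, G z = PP A B C D (Complex.exp (I * b₁ * z)) (Complex.exp (I * b₂ * z)))
    (hFG : ∀ ε : ℝ, 0 < ε → ∃ R : ℝ, 0 < R ∧ ∀ z, R ≤ ‖z‖ → ‖F z - G z‖ ≤ ε * wgt b₁ b₂ z) :
    (∃ H : ℝ, 0 < H ∧ ∀ z : ℂ, H ≤ |z.im| → ‖F z - G z‖ < ‖G z‖) ∧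
    ∀ η : ℝ, 0 < η → ∃ R : ℝ, Lines F G η R := by
  have hwpos : ∀ z, 0 < wgt b₁ b₂ z := fun z => by
    unfold wgt; rw [norm_exp_I_mul, norm_exp_I_mul]; positivity
  have far : ∃ H : ℝ, 0 < H ∧ ∀ z : ℂ, H ≤ |z.im| → ‖F z - G z‖ < ‖G z‖ := by
    obtain ⟨K, c, hK1, hc, HP⟩ := PP_lower A B hC hD
    obtain ⟨H, hH, He⟩ := exp_far hb₁ hb₂ (K := K) (by linarith)
    obtain ⟨R, hR, HR⟩ := hFG (c / 2) (by positivity)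
    refine ⟨max H R, by positivity, fun z hz => ?_⟩
    have h1 := HR z (((le_max_right _ _).trans hz).trans (Complex.abs_im_le_norm z))
    have h2 : c * wgt b₁ b₂ z ≤ ‖G z‖ := by
      rw [hG]
      refine HP _ _ ?_
      rw [norm_exp_I_mul, norm_exp_I_mul]
      rcases le_abs.1 ((le_max_left _ _).trans hz) with h | h
      · exact Or.inl ((He _).1 h)
      · exact Or.inr ((He _).2 (by linarith))
    have := mul_pos hc (hwpos z)
    linarith
  refine ⟨far, fun η hη => ?_⟩
  obtain ⟨H, hH, Hfar⟩ := far
  set L := max H 8 with hL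
  obtain ⟨c, hc, Hc⟩ := unif_lines hb₁ hb₂ A B hC hD hη H L
  set M := Real.exp (|b₁| * (H + η)) + Real.exp (|b₂| * (H + η)) with hM
  have hMp : 0 < M := by positivity
  obtain ⟨R, hR, HR⟩ := hFG (c / (2 * M)) (by positivity)
  have near : ∀ z : ℂ, R ≤ ‖z‖ → |z.im| ≤ H + η → c ≤ ‖G z‖ → ‖F z - G z‖ < ‖G z‖ := by
    intro z h1 h2 h3
    have h4 : wgt b₁ b₂ z ≤ M := add_le_add (exp_bounds b₁ h2).2 (exp_bounds b₂ h2).2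
    have h5 : c / (2 * M) * wgt b₁ b₂ z ≤ c / (2 * M) * M := by gcongr
    have h6 : c / (2 * M) * M = c / 2 := by field_simp
    linarith [HR z h1]
  have hshift : ∀ z₀ w : ℂ, G (z₀ + w) =
      Gs b₁ b₂ A B C D (Complex.exp (I * b₁ * z₀), Complex.exp (I * b₂ * z₀)) w := by
    intro z₀ w
    rw [hG, Gs]
    simp only [← Complex.exp_add, mul_add]
  have hph : ∀ z₀ : ℂ, |z₀.im| ≤ H →
      (Complex.exp (I * b₁ * z₀), Complex.exp (I * b₂ * z₀)) ∈ phases b₁ b₂ H := fun z₀ h =>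
    ⟨exp_bounds b₁ h, exp_bounds b₂ h⟩
  refine ⟨R + 8 + η, fun x hx => ⟨?_, fun y => ?_⟩⟩
  · obtain ⟨t, ht, h⟩ := (Hc _ (hph x (by simpa using hH.le))).1
    refine ⟨x + t, ⟨by linarith [ht.1], by linarith [ht.2]⟩, fun y => ?_⟩
    rcases le_total H |y| with hy | hy
    · exact Hfar _ (by simpa using hy)
    · have hy' := abs_le.1 hy
      have hHL : H ≤ L := le_max_left _ _
      have h1 := h y ⟨by linarith [hy'.1], by linarith [hy'.2]⟩
      rw [← hshift] at h1
      have e : ((x + t : ℝ) : ℂ) + y * I = x + (t + y * I) := by push_cast; ring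
      rw [e]
      refine near _ ?_ ?_ h1
      · refine le_trans ?_ (Complex.abs_re_le_norm _)
        have : ((x:ℂ) + (t + y * I)).re = x + t := by simp
        rw [this]
        rcases le_abs.1 hx with h | h
        · exact le_abs.2 (Or.inl (by linarith [ht.1]))
        · exact le_abs.2 (Or.inr (by linarith [ht.2]))
      · have : ((x:ℂ) + (t + y * I)).im = y := by simp
        rw [this]; linarith
  · rcases le_total H |y| with hy | hy
    · exact ⟨y, ⟨le_rfl, by linarith⟩, fun t _ => Hfar _ (by simpa using hy)⟩
    · obtain ⟨s, hs, h⟩ := (Hc _ (hph (x + y * I) (by simpa using hy))).2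
      refine ⟨y + s, ⟨by linarith [hs.1], by linarith [hs.2]⟩, fun t ht => ?_⟩
      have h8 : (8:ℝ) ≤ L := le_max_right _ _
      have h1 := h (t - x) ⟨by linarith [ht.1], by linarith [ht.2]⟩
      rw [← hshift] at h1
      have e : (x:ℂ) + y * I + (((t - x : ℝ) : ℂ) + s * I) = (t:ℂ) + ((y + s : ℝ) : ℂ) * I := by
        push_cast; ring
      rw [e] at h1
      refine near _ ?_ ?_ h1
      · refine le_trans ?_ (Complex.abs_re_le_norm _)
        have : ((t:ℂ) + ((y + s : ℝ) : ℂ) * I).re = t := by simp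
        rw [this]
        rcases le_abs.1 hx with h | h
        · exact le_abs.2 (Or.inl (by linarith [ht.1]))
        · exact le_abs.2 (Or.inr (by linarith [ht.2]))
      · have : ((t:ℂ) + ((y + s : ℝ) : ℂ) * I).im = y + s := by simp
        rw [this]
        refine (abs_add_le _ _).trans ?_
        rw [abs_of_nonneg hs.1]
        linarith [hs.2]

end lines

/-! ### Matching the zeros cell by cell -/

lemma exists_cell {t : ℤ → ℝ} (ht : StrictMono t) (hlo : ∀ y, ∃ k, t k < y)
    (hhi : ∀ y, ∃ k, y < t k) {y : ℝ} (hy : ∀ k, t k ≠ y) :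
    ∃ k, y ∈ Ioo (t k) (t (k + 1)) := by
  obtain ⟨b, hb⟩ := hhi y
  obtain ⟨k, hk, hmax⟩ := Int.exists_greatest_of_bdd (P := fun k => t k < y)
    ⟨b, fun z hz => (ht.lt_iff_lt.1 (hz.trans hb)).le⟩ (hlo y)
  refine ⟨k, hk, lt_of_not_ge fun h => ?_⟩
  have := hmax (k + 1) (lt_of_le_of_ne h (hy _))
  omega

lemma cell_unique {t : ℤ → ℝ} (ht : StrictMono t) {y : ℝ} {k l : ℤ}
    (hk : y ∈ Ioo (t k) (t (k + 1))) (hl : y ∈ Ioo (t l) (t (l + 1))) : k = l := by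
  have h1 := ht.lt_iff_lt.1 (hk.1.trans hl.2)
  have h2 := ht.lt_iff_lt.1 (hl.1.trans hk.2)
  omega

/-- If the zeros of `F` and `G` are covered by disjoint open rectangles whose boundaries satisfy
the Rouché inequality, the rectangle-wise bijections glue to a bijection of all zeros counted
with multiplicity. -/
lemma exists_matching {ι : Type*} {F G : ℂ → ℂ} (hF : Differentiable ℂ F)
    (hG : Differentiable ℂ G) (a b c d : ι → ℝ) (hab : ∀ i, a i < b i) (hcd : ∀ i, c i < d i)
    (hbd : ∀ i, ∀ z ∈ bdry (a i) (b i) (c i) (d i), ‖F z - G z‖ < ‖G z‖)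
    (hcov : ∀ z, (F z = 0 ∨ G z = 0) → ∃ i, z ∈ orect (a i) (b i) (c i) (d i))
    (hdisj : ∀ z i j, z ∈ orect (a i) (b i) (c i) (d i) → z ∈ orect (a j) (b j) (c j) (d j) →
      i = j) :
    ∃ σ : Zt G ≃ Zt F, ∀ p, ∃ i, p.1 ∈ orect (a i) (b i) (c i) (d i) ∧
      (σ p).1 ∈ orect (a i) (b i) (c i) (d i) := by
  choose f hf using fun p : Zt F => hcov p.1 (Or.inl p.zero)
  choose g hg using fun p : Zt G => hcov p.1 (Or.inr p.zero)
  have e : ∀ i, Nonempty ({p : Zt G // g p = i} ≃ {p : Zt F // f p = i}) := by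
    intro i
    obtain ⟨e⟩ := (rouche (hab i) (hcd i) hF hG (hbd i)).2
    refine ⟨((Equiv.subtypeEquivRight fun p => ?_).trans e).trans
      (Equiv.subtypeEquivRight fun p => ?_)⟩
    · exact ⟨fun h => h ▸ hg p, fun h => hdisj _ _ _ (hg p) h⟩
    · exact ⟨fun h => hdisj _ _ _ (hf p) h, fun h => h ▸ hf p⟩
  refine ⟨Equiv.ofFiberEquiv fun i => (e i).some, fun p => ⟨g p, hg p, ?_⟩⟩
  have h := Equiv.ofFiberEquiv_map (fun i => (e i).some) p
  rw [← h]
  exact hf _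

/-- A grid of vertical lines `t n` and, over column `n`, horizontal segments `s n k`, all carrying
the Rouché inequality and with mesh at most `w n` in column `n`, yields a matching moving each zero of column `n` by at most `2 * w n`. -/
lemma grid_matching {F G : ℂ → ℂ} (hF : Differentiable ℂ F) (hG : Differentiable ℂ G)
    {t : ℤ → ℝ} {s : ℤ → ℤ → ℝ} {w : ℤ → ℝ} (ht : StrictMono t) (hs : ∀ n, StrictMono (s n))
    (htlo : ∀ y, ∃ k, t k < y) (hthi : ∀ y, ∃ k, y < t k)
    (hslo : ∀ n y, ∃ k, s n k < y) (hshi : ∀ n y, ∃ k, y < s n k)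
    (htg : ∀ n, ∀ y : ℝ, ‖F (t n + y * I) - G (t n + y * I)‖ < ‖G (t n + y * I)‖)
    (hsg : ∀ n k, ∀ x ∈ Icc (t n) (t (n + 1)),
      ‖F (x + s n k * I) - G (x + s n k * I)‖ < ‖G (x + s n k * I)‖)
    (htw : ∀ n, t (n + 1) - t n ≤ w n) (hsw : ∀ n k, s n (k + 1) - s n k ≤ w n) :
    ∃ σ : Zt G ≃ Zt F, ∀ p, ∃ n, p.1.re ∈ Ioo (t n) (t (n + 1)) ∧
      ‖(σ p).1 - p.1‖ ≤ 2 * w n := by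
  have good0 : ∀ z, ‖F z - G z‖ < ‖G z‖ → ¬ (F z = 0 ∨ G z = 0) := by
    rintro z h (h0 | h0)
    · simp [h0] at h
    · rw [h0, norm_zero] at h; exact absurd h (norm_nonneg _).not_gt
  have key := exists_matching (ι := ℤ × ℤ) hF hG (fun i => t i.1) (fun i => t (i.1 + 1))
    (fun i => s i.1 i.2) (fun i => s i.1 (i.2 + 1)) (fun i => ht (by omega))
    (fun i => hs _ (by omega)) ?_ ?_ ?_
  rotate_left
  · rintro ⟨n, k⟩ z ⟨h1, h2, h3⟩
    simp only at h1 h2 h3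
    have hz := Complex.re_add_im z
    rcases h3 with h | h | h | h
    · rw [← hz, h]; exact htg _ _
    · rw [← hz, h]; exact htg _ _
    · rw [← hz, h]; exact hsg _ _ _ h1
    · rw [← hz, h]; exact hsg _ _ _ h1
  · intro z hz
    have hzz := Complex.re_add_im z
    obtain ⟨n, hn⟩ := exists_cell ht htlo hthi (y := z.re) fun k hk =>
      good0 z (by rw [← hzz, ← hk]; exact htg _ _) hz
    obtain ⟨k, hk⟩ := exists_cell (hs n) (hslo n) (hshi n) (y := z.im) fun k hk =>
      good0 z (by rw [← hzz, ← hk]; exact hsg _ _ _ ⟨hn.1.le, hn.2.le⟩) hz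
    exact ⟨(n, k), hn, hk⟩
  · rintro z ⟨n, k⟩ ⟨n', k'⟩ h1 h2
    obtain rfl : n = n' := cell_unique ht h1.1 h2.1
    obtain rfl : k = k' := cell_unique (hs n) h1.2 h2.2
    rfl
  obtain ⟨σ, hσ⟩ := key
  refine ⟨σ, fun p => ?_⟩
  obtain ⟨⟨n, k⟩, h1, h2⟩ := hσ p
  refine ⟨n, h1.1, ?_⟩
  simp only [orect, mem_ofPred_eq, mem_Ioo] at h1 h2
  refine (Complex.norm_le_abs_re_add_abs_im _).trans ?_
  have a1 : |((σ p).1 - p.1).re| ≤ w n := by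
    rw [sub_re, abs_le]; constructor <;> linarith [htw n]
  have a2 : |((σ p).1 - p.1).im| ≤ w n := by
    rw [sub_im, abs_le]; constructor <;> linarith [hsw n k]
  linarith

/-! ### An adaptive grid -/

lemma Lines.mono {F G : ℂ → ℂ} {η η' R R' : ℝ} (h : Lines F G η R) (hη : η ≤ η') (hR : R ≤ R') :
    Lines F G η' R' := by
  intro x hx
  obtain ⟨⟨t, ht, h1⟩, h2⟩ := h x (hR.trans hx)
  refine ⟨⟨t, ⟨ht.1, by linarith [ht.2]⟩, h1⟩, fun y => ?_⟩
  obtain ⟨s, hs, h3⟩ := h2 y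
  exact ⟨s, ⟨hs.1, by linarith [hs.2]⟩, h3⟩

/-- A positive nonincreasing scale function `δ → 0` such that good lines exist with gap `δ x`
beyond abscissa `x`. -/
lemma exists_scale {F G : ℂ → ℂ} (h : ∀ η : ℝ, 0 < η → ∃ R : ℝ, Lines F G η R) :
    ∃ (R₀ : ℝ) (δ : ℝ → ℝ), 0 < R₀ ∧ (∀ x, R₀ ≤ x → 0 < δ x ∧ δ x ≤ 2 ∧ Lines F G (δ x) x) ∧
      (∀ x y, R₀ ≤ x → x ≤ y → δ y ≤ δ x) ∧
      (∀ ε : ℝ, 0 < ε → ∃ X : ℝ, ∀ x, X ≤ x → δ x < ε) := by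
  obtain ⟨R, hR⟩ := h 1 one_pos
  let S : ℝ → Set ℝ := fun x => {η | 0 < η ∧ Lines F G η x}
  have hbd : ∀ x, BddBelow (S x) := fun x => ⟨0, fun η hη => hη.1.le⟩
  have hne : ∀ x, max R 1 ≤ x → 1 ∈ S x := fun x hx =>
    ⟨one_pos, hR.mono le_rfl ((le_max_left _ _).trans hx)⟩
  have hnn : ∀ x, 0 ≤ sInf (S x) := fun x => Real.sInf_nonneg fun η hη => hη.1.le
  refine ⟨max R 1, fun x => sInf (S x) + 1 / (1 + x), by positivity, ?_, ?_, ?_⟩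
  · intro x hx
    have hx1 : 1 ≤ x := (le_max_right _ _).trans hx
    have hp : 0 < 1 / (1 + x) := by positivity
    refine ⟨by linarith [hnn x], ?_, ?_⟩
    · have h1 : sInf (S x) ≤ 1 := csInf_le (hbd x) (hne x hx)
      have h2 : 1 / (1 + x) ≤ 1 := by
        rw [div_le_one (by positivity)]; linarith
      linarith
    · obtain ⟨η, hη, hlt⟩ := exists_lt_of_csInf_lt ⟨1, hne x hx⟩
        (show sInf (S x) < sInf (S x) + 1 / (1 + x) by linarith)
      exact hη.2.mono hlt.le le_rfl
  · intro x y hx hxy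
    have hx1 : 1 ≤ x := (le_max_right _ _).trans hx
    have h1 : sInf (S y) ≤ sInf (S x) := csInf_le_csInf (hbd y) ⟨1, hne x hx⟩
      fun η hη => ⟨hη.1, hη.2.mono le_rfl hxy⟩
    have h2 : 1 / (1 + y) ≤ 1 / (1 + x) := by gcongr
    simpa using add_le_add h1 h2
  · intro ε hε
    obtain ⟨R', hR'⟩ := h (ε / 2) (by positivity)
    refine ⟨max R' (2 / ε), fun x hx => ?_⟩
    have h1 : sInf (S x) ≤ ε / 2 :=
      csInf_le (hbd x) ⟨by positivity, hR'.mono le_rfl ((le_max_left _ _).trans hx)⟩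
    have h2 : 2 / ε ≤ x := (le_max_right _ _).trans hx
    have h3 : 0 < 2 / ε := by positivity
    have h4 : 1 / (1 + x) < ε / 2 := by
      rw [div_lt_iff₀ (by linarith)]
      rw [div_le_iff₀ hε] at h2
      nlinarith
    linarith

/-- If every window of length `η` contains a point of `P`, some bi-infinite sequence of points of
`P` has gaps at most `3 * η`. -/
lemma exists_rows {P : ℝ → Prop} {η : ℝ} (hη : 0 < η)
    (h : ∀ y : ℝ, ∃ s ∈ Icc y (y + η), P s) :
    ∃ s : ℤ → ℝ, StrictMono s ∧ (∀ y, ∃ k, s k < y) ∧ (∀ y, ∃ k, y < s k) ∧ (∀ k, P (s k)) ∧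
      ∀ k, s (k + 1) - s k ≤ 3 * η := by
  choose s hs hP using fun k : ℤ => h (2 * k * η)
  have hs' : ∀ k : ℤ, 2 * k * η ≤ s k ∧ s k ≤ 2 * k * η + η := fun k => hs k
  refine ⟨s, strictMono_int_of_lt_succ fun k => ?_, fun y => ?_, fun y => ?_, hP, fun k => ?_⟩
  · have h1 := hs' k; have h2 := hs' (k + 1); push_cast at h2; nlinarith
  · obtain ⟨k, hk⟩ := exists_int_lt ((y - η) / (2 * η))
    refine ⟨k, ?_⟩
    rw [lt_div_iff₀ (by positivity)] at hk
    linarith [(hs' k).2]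
  · obtain ⟨k, hk⟩ := exists_int_gt (y / (2 * η))
    refine ⟨k, ?_⟩
    rw [div_lt_iff₀ (by positivity)] at hk
    linarith [(hs' k).1]
  · have h1 := hs' k; have h2 := hs' (k + 1); push_cast at h2; nlinarith

/-- The grid is adapted to the scale function: the mesh `w n` tends to `0` as `|n| → ∞`, apart from
one large column around the imaginary axis. -/
lemma exists_grid {F G : ℂ → ℂ} (hfar : ∃ H : ℝ, 0 < H ∧ ∀ z : ℂ, H ≤ |z.im| →
      ‖F z - G z‖ < ‖G z‖) (h : ∀ η : ℝ, 0 < η → ∃ R : ℝ, Lines F G η R) :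
    ∃ (t : ℤ → ℝ) (s : ℤ → ℤ → ℝ) (w : ℤ → ℝ), StrictMono t ∧ (∀ n, StrictMono (s n)) ∧
      (∀ y, ∃ k, t k < y) ∧ (∀ y, ∃ k, y < t k) ∧
      (∀ n y, ∃ k, s n k < y) ∧ (∀ n y, ∃ k, y < s n k) ∧
      (∀ n, ∀ y : ℝ, ‖F (t n + y * I) - G (t n + y * I)‖ < ‖G (t n + y * I)‖) ∧
      (∀ n k, ∀ x ∈ Icc (t n) (t (n + 1)),
        ‖F (x + s n k * I) - G (x + s n k * I)‖ < ‖G (x + s n k * I)‖) ∧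
      (∀ n, t (n + 1) - t n ≤ w n) ∧ (∀ n k, s n (k + 1) - s n k ≤ w n) ∧
      ∀ ε : ℝ, 0 < ε → {n | ¬ w n < ε}.Finite := by
  obtain ⟨H, hH, hfar⟩ := hfar
  obtain ⟨R₀, δ, hR₀, hδ, hanti, hlim⟩ := exists_scale h
  -- abscissae `a (n + 1) = a n + 2 δ (a n)`; they are unbounded because `δ` is nonincreasing
  let a : ℕ → ℝ := fun n => Nat.rec R₀ (fun _ x => x + 2 * δ x) n
  have ha0 : a 0 = R₀ := rfl
  have hasucc : ∀ n, a (n + 1) = a n + 2 * δ (a n) := fun n => rfl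
  have haR : ∀ n, R₀ ≤ a n := by
    intro n
    induction n with
    | zero => exact le_rfl
    | succ n ih => rw [hasucc]; linarith [(hδ _ ih).1]
  have hpos : ∀ n, 0 < δ (a n) := fun n => (hδ _ (haR n)).1
  have hle2 : ∀ n, δ (a n) ≤ 2 := fun n => (hδ _ (haR n)).2.1
  have hL : ∀ n, Lines F G (δ (a n)) (a n) := fun n => (hδ _ (haR n)).2.2
  have hstep : ∀ n, δ (a (n + 1)) ≤ δ (a n) := fun n =>
    hanti _ _ (haR n) (by rw [hasucc]; linarith [hpos n])
  have hamono : Monotone a := monotone_nat_of_le_succ fun n => by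
    rw [hasucc]; linarith [hpos n]
  have hunb : ∀ M : ℝ, ∃ n, M < a n := by
    intro M
    by_contra! hM
    have hRM : R₀ ≤ M := hM 0
    have hδM := (hδ M hRM).1
    have : ∀ n : ℕ, R₀ + n * (2 * δ M) ≤ a n := by
      intro n
      induction n with
      | zero => simp [ha0]
      | succ n ih =>
        rw [hasucc]; push_cast
        linarith [hanti _ _ (haR n) (hM n)]
    obtain ⟨n, hn⟩ := exists_nat_gt ((M - R₀) / (2 * δ M))
    rw [div_lt_iff₀ (by positivity)] at hn
    linarith [this n, hM n]
  have habs : ∀ n x, a n ≤ x → a n ≤ |x| := fun n x hx => hx.trans (le_abs_self x)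
  have habs' : ∀ n x, x ≤ - a n → a n ≤ |x| := fun n x hx =>
    (le_neg_of_le_neg hx).trans (neg_le_abs x)
  choose r hr hrg using fun n => (hL n (a n) (habs n _ le_rfl)).1
  choose u hu hug using fun n => (hL n (-a n - δ (a n)) (habs' n _ (by linarith [hpos n]))).1
  choose rs hrs using fun n => exists_rows (hpos n) (hL n (a n) (habs n _ le_rfl)).2
  choose us hus using fun n => exists_rows (hpos n)
    (hL n (-a n - 8) (habs' n _ (by linarith))).2
  have hr' : ∀ n, a n ≤ r n ∧ r n ≤ a n + δ (a n) := fun n => hr n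
  have hu' : ∀ n, -a n - δ (a n) ≤ u n ∧ u n ≤ -a n := fun n =>
    ⟨(hu n).1, by linarith [(hu n).2]⟩
  -- columns on the right come from `r`, columns on the left from `u`; column `-1` is the bounded
  -- central one, cut at the heights `H * (2 * k + 1)`, where the inequality holds by `hfar`
  let t : ℤ → ℝ := fun n => Int.rec r u n
  let s : ℤ → ℤ → ℝ := fun n => Int.rec rs
    (fun m => Nat.rec (fun k : ℤ => H * (2 * k + 1)) (fun j _ => us j) m) n
  let w : ℤ → ℝ := fun n => Int.rec (fun m => 3 * δ (a m))
    (fun m => Nat.rec (r 0 - u 0 + 2 * H) (fun j _ => 3 * δ (a j)) m) n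
  have cases3 : ∀ {P : ℤ → Prop}, (∀ m : ℕ, P (Int.ofNat m)) → P (Int.negSucc 0) →
      (∀ m : ℕ, P (Int.negSucc (m + 1))) → ∀ n, P n := by
    intro P h1 h2 h3 n
    match n with
    | .ofNat m => exact h1 m
    | .negSucc 0 => exact h2
    | .negSucc (m + 1) => exact h3 m
  have e1 : ∀ m : ℕ, Int.ofNat m + 1 = Int.ofNat (m + 1) := fun m => rfl
  have e2 : Int.negSucc 0 + 1 = Int.ofNat 0 := rfl
  have e3 : ∀ m : ℕ, Int.negSucc (m + 1) + 1 = Int.negSucc m := fun m => rfl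
  have htr : ∀ m, t (Int.ofNat m) = r m := fun _ => rfl
  have htu : ∀ m, t (Int.negSucc m) = u m := fun _ => rfl
  have hsr : ∀ m, s (Int.ofNat m) = rs m := fun _ => rfl
  have hsc : s (Int.negSucc 0) = fun k : ℤ => H * (2 * k + 1) := rfl
  have hsu : ∀ m, s (Int.negSucc (m + 1)) = us m := fun _ => rfl
  have hwr : ∀ m, w (Int.ofNat m) = 3 * δ (a m) := fun _ => rfl
  have hwc : w (Int.negSucc 0) = r 0 - u 0 + 2 * H := rfl
  have hwu : ∀ m, w (Int.negSucc (m + 1)) = 3 * δ (a m) := fun _ => rfl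
  clear_value t s w
  refine ⟨t, s, w, strictMono_int_of_lt_succ (cases3 (fun m => ?_) ?_ fun m => ?_),
    cases3 (fun m => ?_) ?_ fun m => ?_, fun y => ?_, fun y => ?_,
    cases3 (fun m => ?_) ?_ fun m => ?_, cases3 (fun m => ?_) ?_ fun m => ?_,
    ?_, cases3 (fun m => ?_) ?_ fun m => ?_, cases3 (fun m => ?_) ?_ fun m => ?_,
    cases3 (fun m => ?_) ?_ fun m => ?_, fun ε hε => ?_⟩
  · rw [e1, htr, htr]; linarith [hr' m, hr' (m + 1), hasucc m, hpos m]
  · rw [e2, htr, htu]; linarith [hr' 0, hu' 0, haR 0]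
  · rw [e3, htu, htu]; linarith [hu' m, hu' (m + 1), hasucc m, hpos m, hstep m]
  · rw [hsr]; exact (hrs m).1
  · rw [hsc]; exact strictMono_int_of_lt_succ fun k => by push_cast; nlinarith
  · rw [hsu]; exact (hus m).1
  · obtain ⟨n, hn⟩ := hunb (-y)
    exact ⟨Int.negSucc n, by rw [htu]; linarith [hu' n]⟩
  · obtain ⟨n, hn⟩ := hunb y
    exact ⟨Int.ofNat n, by rw [htr]; linarith [hr' n]⟩
  · rw [hsr]; exact (hrs m).2.1
  · rw [hsc]
    intro y
    obtain ⟨k, hk⟩ := exists_int_lt ((y / H - 1) / 2)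
    refine ⟨k, ?_⟩
    have : y = H * (y / H) := by field_simp
    rw [this]
    exact mul_lt_mul_of_pos_left (by linarith) hH
  · rw [hsu]; exact (hus m).2.1
  · rw [hsr]; exact (hrs m).2.2.1
  · rw [hsc]
    intro y
    obtain ⟨k, hk⟩ := exists_int_gt ((y / H - 1) / 2)
    refine ⟨k, ?_⟩
    have : y = H * (y / H) := by field_simp
    rw [this]
    exact mul_lt_mul_of_pos_left (by linarith) hH
  · rw [hsu]; exact (hus m).2.2.1
  · intro n y
    match n with
    | .ofNat m => rw [htr]; exact hrg m y
    | .negSucc m => rw [htu]; exact hug m y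
  · rw [e1, htr, htr, hsr]
    intro k x hx
    exact (hrs m).2.2.2.1 k x ⟨by linarith [hx.1, hr' m], by
      linarith [hx.2, hr' (m + 1), hasucc m, hstep m, hle2 m]⟩
  · rw [hsc]
    intro k x hx
    apply hfar
    have : ((x : ℂ) + ((H * (2 * (k:ℝ) + 1) : ℝ) : ℂ) * I).im = H * (2 * k + 1) := by simp
    rw [this, abs_mul, abs_of_pos hH]
    have h1 : (1:ℝ) ≤ |2 * (k:ℝ) + 1| := by
      have : (1:ℤ) ≤ |2 * k + 1| := Int.one_le_abs (by omega)
      exact_mod_cast this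
    nlinarith
  · rw [e3, htu, htu, hsu]
    intro k x hx
    exact (hus m).2.2.2.1 k x ⟨by
      linarith [hx.1, hu' (m + 1), hasucc m, hstep m, hle2 m], by linarith [hx.2, hu' m]⟩
  · rw [e1, htr, htr, hwr]; linarith [hr' m, hr' (m + 1), hasucc m, hstep m]
  · rw [e2, htr, htu, hwc]; linarith
  · rw [e3, htu, htu, hwu]; linarith [hu' m, hu' (m + 1), hasucc m, hstep m]
  · rw [hsr, hwr]; exact (hrs m).2.2.2.2
  · rw [hsc, hwc]; intro k; push_cast; linarith [hr' 0, hu' 0, haR 0]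
  · rw [hsu, hwu]; exact (hus m).2.2.2.2
  · obtain ⟨X, hX⟩ := hlim (ε / 3) (by positivity)
    obtain ⟨N, hN⟩ := hunb X
    have hsm : ∀ m, N ≤ m → 3 * δ (a m) < ε := fun m hm => by
      linarith [hX (a m) (hN.le.trans (hamono hm))]
    refine (Set.finite_Icc (-(N:ℤ) - 1) N).subset fun n => ?_
    revert n
    refine cases3 (fun m hm => ?_) (fun _ => ?_) fun m hm => ?_
    · have : ¬ N ≤ m := fun h => hm (by rw [hwr]; exact hsm m h)
      simp only [mem_Icc, Int.ofNat_eq_natCast]; omega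
    · simp only [mem_Icc]; omega
    · have : ¬ N ≤ m := fun h => hm (by rw [hwu]; exact hsm m h)
      simp only [mem_Icc]; omega

/-! ### Enumerations with multiplicity -/

lemma analyticOrderNatAt_iff {F : ℂ → ℂ} (hF : Differentiable ℂ F) {z₁ : ℂ} (h1 : F z₁ ≠ 0)
    (μ : ℂ) (m : ℕ) : analyticOrderNatAt F μ = m ↔
      (∀ j < m, iteratedDeriv j F μ = 0) ∧ iteratedDeriv m F μ ≠ 0 := by
  rw [← analyticOrderAt_eq_nat_iff_iteratedDeriv_eq_zero (hF.analyticAt μ)]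
  rw [← Nat.cast_analyticOrderNatAt (order_ne_top hF h1 μ)]
  exact Nat.cast_inj.symm

/-- An enumeration with multiplicity is the same as a bijection with the zeros counted with
multiplicity; this is one direction, `zeroEnum_of_equiv` the other. -/
lemma exists_index_equiv {G : ℂ → ℂ} (hG : Differentiable ℂ G) {z₁ : ℂ} (h1 : G z₁ ≠ 0)
    {lam : ℤ → ℂ} (h : ZeroEnumWithMult G lam) :
    ∃ e : ℤ ≃ Zt G, ∀ n, (e n).1 = lam n := by
  obtain ⟨hz, -, hm⟩ := h
  have key : ∀ μ, Nonempty ({n : ℤ // lam n = μ} ≃ {p : Zt G // p.1 = μ}) := by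
    intro μ
    have e2 : {p : Zt G // p.1 = μ} ≃ Fin (analyticOrderNatAt G μ) := Equiv.sigmaSubtype μ
    by_cases hμ : G μ = 0
    · obtain ⟨hfin, m, hc, hd⟩ := hm μ hμ
      have : Finite {n : ℤ // lam n = μ} := hfin.to_subtype
      rw [(analyticOrderNatAt_iff hG h1 μ m).2 hd, ← hc] at e2
      exact ⟨(Finite.equivFin {n : ℤ // lam n = μ}).trans e2.symm⟩
    · have i1 : IsEmpty {n : ℤ // lam n = μ} := ⟨fun n => hμ (n.2 ▸ hz _)⟩
      have i2 : IsEmpty {p : Zt G // p.1 = μ} := ⟨fun p => hμ (p.2 ▸ p.1.zero)⟩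
      exact ⟨Equiv.equivOfIsEmpty _ _⟩
  exact ⟨Equiv.ofFiberEquiv fun μ => (key μ).some,
    fun n => Equiv.ofFiberEquiv_map (fun μ => (key μ).some) n⟩

lemma zeroEnum_of_equiv {F : ℂ → ℂ} (hF : Differentiable ℂ F) {z₁ : ℂ} (h1 : F z₁ ≠ 0)
    (e : ℤ ≃ Zt F) : ZeroEnumWithMult F fun n => (e n).1 := by
  have e' : ∀ μ, {n : ℤ // (e n).1 = μ} ≃ Fin (analyticOrderNatAt F μ) := fun μ =>
    (e.subtypeEquiv fun n => Iff.rfl : {n : ℤ // (e n).1 = μ} ≃ {p : Zt F // p.1 = μ}).trans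
      (Equiv.sigmaSubtype μ)
  refine ⟨fun n => (e n).zero, fun μ hμ => ?_, fun μ hμ => ?_⟩
  · have hpos : analyticOrderNatAt F μ ≠ 0 := fun h0 =>
      ((analyticOrderNatAt_iff hF h1 μ 0).1 h0).2 (by simpa using hμ)
    let n := (e' μ).symm ⟨0, Nat.pos_of_ne_zero hpos⟩
    exact ⟨n.1, n.2⟩
  · refine ⟨Set.finite_coe_iff.1 (Finite.of_equiv _ (e' μ).symm), analyticOrderNatAt F μ, ?_,
      (analyticOrderNatAt_iff hF h1 μ _).1 rfl⟩
    exact (Nat.card_congr (e' μ)).trans (Nat.card_fin _)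

/-- Abstract conclusion: good lines at every scale force the zeros of `F` and `G` to be
asymptotically close. -/
theorem enum_of_lines {F G : ℂ → ℂ} (hF : Differentiable ℂ F) (hG : Differentiable ℂ G)
    (hfar : ∃ H : ℝ, 0 < H ∧ ∀ z : ℂ, H ≤ |z.im| → ‖F z - G z‖ < ‖G z‖)
    (h : ∀ η : ℝ, 0 < η → ∃ R : ℝ, Lines F G η R)
    {lam0 : ℤ → ℂ} (hlam0 : ZeroEnumWithMult G lam0) :
    ∃ lam : ℤ → ℂ, ZeroEnumWithMult F lam ∧
      Tendsto (fun n : ℤ => lam n - lam0 n) cofinite (nhds 0) := by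
  obtain ⟨t, s, w, ht, hs, h1, h2, h3, h4, h5, h6, h7, h8, hw⟩ := exists_grid hfar h
  obtain ⟨σ, hσ⟩ := grid_matching hF hG ht hs h1 h2 h3 h4 h5 h6 h7 h8
  obtain ⟨H, hH, hfar⟩ := hfar
  have hgood := hfar (H * I) (by simp [abs_of_pos hH])
  have hG1 : G (H * I) ≠ 0 := fun h0 => by
    rw [h0, norm_zero] at hgood; exact absurd hgood (norm_nonneg _).not_gt
  have hF1 : F (H * I) ≠ 0 := fun h0 => by simp [h0] at hgood
  obtain ⟨e, he⟩ := exists_index_equiv hG hG1 hlam0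
  refine ⟨fun n => (σ (e n)).1, zeroEnum_of_equiv hF hF1 (e.trans σ), ?_⟩
  rw [Metric.tendsto_nhds]
  intro ε hε
  rw [eventually_cofinite]
  set N := {n : ℤ | ¬ w n < ε / 2} with hN
  have hNf : N.Finite := hw _ (by positivity)
  have hS : (⋃ m ∈ N, {z : ℂ | z ∈ Icc (t m) (t (m + 1)) ×ℂ Icc (-H) H ∧ G z = 0}).Finite :=
    hNf.biUnion fun m _ => finite_zeros hG hG1 isCompact_crect
  refine (hS.biUnion fun μ hμ => (hlam0.2.2 μ ?_).1).subset ?_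
  · simp only [mem_iUnion] at hμ
    obtain ⟨_, _, hμ⟩ := hμ
    exact hμ.2
  · intro n hn
    simp only [mem_iUnion]
    refine ⟨lam0 n, ?_, rfl⟩
    obtain ⟨m, hm, hd⟩ := hσ (e n)
    rw [he] at hm hd
    refine ⟨m, fun hlt => hn ?_, ⟨⟨hm.1.le, hm.2.le⟩, ?_⟩, hlam0.1 n⟩
    · rw [dist_zero_right]; linarith
    · have : |(lam0 n).im| < H := by
        by_contra! hc
        have := hfar _ hc
        rw [hlam0.1 n, norm_zero] at this
        exact absurd this (norm_nonneg _).not_gt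
      exact ⟨(abs_lt.1 this).1.le, (abs_lt.1 this).2.le⟩

/-- If the boundary conditions are regular and `{λ_n⁰}` is an enumeration
(with multiplicity, ordered by real parts) of the zeros of `Δ₀`, then the zeros of `Δ` can be
enumerated (with multiplicity) as `{λ_n}` so that `λ_n − λ_n⁰ → 0` as `|n| → ∞`. -/
theorem riesz_dirac_stmt17 (b₁ b₂ : ℝ) (hb₁ : b₁ < 0) (hb₂ : 0 < b₂)
    (Q₁₂ Q₂₁ : ℝ → ℂ)
    (hQ₁₂ : IntegrableOn Q₁₂ (Set.Icc (0:ℝ) 1))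
    (hQ₂₁ : IntegrableOn Q₂₁ (Set.Icc (0:ℝ) 1))
    (Φ : ℂ → ℝ → Fin 2 → Fin 2 → ℂ)
    (hΦ : IsFundSol b₁ b₂ Q₁₂ Q₂₁ Φ)
    (aM : Fin 2 → Fin 4 → ℂ)
    (hreg : Jdet aM 0 3 * Jdet aM 2 1 ≠ 0)
    (lam0 : ℤ → ℂ)
    (hlam0 : ZeroEnumWithMult (Delta0 b₁ b₂ aM) lam0)
    (hord : Monotone fun n : ℤ => (lam0 n).re) :
    ∃ lam : ℤ → ℂ, ZeroEnumWithMult (charDet aM Φ) lam ∧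
      Tendsto (fun n : ℤ => lam n - lam0 n) cofinite (nhds 0) := by
  have hJ := mul_ne_zero_iff.1 hreg
  obtain ⟨hfar, hlines⟩ := good_lines (F := charDet aM Φ) (G := Delta0 b₁ b₂ aM)
    (A := Jdet aM 0 1) (B := Jdet aM 2 3) (C := Jdet aM 2 1) (D := Jdet aM 0 3)
    hb₁ hb₂ hJ.2 hJ.1
    (fun z => by
      rw [Delta0, PP, ← Complex.exp_add]
      ring_nf)
    (fun ε hε => charDet_asymp hb₁ hb₂ hQ₁₂ hQ₂₁ hΦ aM hε)
  exact enum_of_lines (charDet_differentiable hb₁.ne hb₂.ne' hQ₁₂ hQ₂₁ hΦ aM)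
    (Delta0_differentiable b₁ b₂ aM) hfar hlines hlam0
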